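/- arXiv:1805.01422 — 3 statements merged into one kernel-verified Lean document; each statement's English description precedes it below -/
import Mathlib

section
/- Fix α ∈ (0,∞) and n ∈ ℕ. Suppose θ is bounded, i.e. sup_{P∈P} |θ(P)| < ∞ (Condition A); the loss l : [0,∞) → [0,∞) is nondecreasing with l(0) = 0 and l(3t/2) ≤ a·l(t) for all t ≥ 0, for some a ∈ (1,∞) (Condition B); P is convex and dominated; and θ : P → ℝ is linear. Then the α-private minimax risk satisfies M_{n,α}(P, θ) ≤ C1 · l( ω_TV( (4/√n)·(e^α+1)/(e^α−1) ) ), where C1 = [1 + 8a²/(2a−1)] · a^{⌈2 log(C)/log(3/2)⌉ + 1} with C = √(2 log(2a)) + 1. -/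
open MeasureTheory ProbabilityTheory ENNReal

namespace PrivacyPaper

variable {X Z Ω : Type*} [MeasurableSpace X] [MeasurableSpace Z] [MeasurableSpace Ω]

/-- Total variation distance between two measures:
`d_TV(P0, P1) = sup_{A measurable} |P0(A) - P1(A)|`. -/
noncomputable def dTV (P0 P1 : Measure Ω) : ℝ :=
  ⨆ A : {A : Set Ω // MeasurableSet A}, |(P0 A.1).toReal - (P1 A.1).toReal|

/-- Hellinger distance between two measures, computed via densities with respect to the
dominating measure `P0 + P1`. -/
noncomputable def dH (P0 P1 : Measure Ω) : ℝ :=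
  Real.sqrt (∫ ω, (Real.sqrt ((P0.rnDeriv (P0 + P1) ω).toReal) -
    Real.sqrt ((P1.rnDeriv (P0 + P1) ω).toReal)) ^ 2 ∂(P0 + P1))

/-- Hellinger affinity `ρ(P0, P1) = ∫ √(p0 p1) dμ`, with `μ = P0 + P1`. -/
noncomputable def hellingerAffinity (P0 P1 : Measure Ω) : ℝ :=
  ∫ ω, Real.sqrt ((P0.rnDeriv (P0 + P1) ω).toReal * (P1.rnDeriv (P0 + P1) ω).toReal)
    ∂(P0 + P1)

/-- Modulus of continuity of a functional `θ` over `P` with respect to a distance `d`,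
with values in `ℝ≥0∞`. -/
noncomputable def modulus (d : Measure X → Measure X → ℝ) (P : Set (Measure X))
    (θ : Measure X → ℝ) (ε : ℝ) : ℝ≥0∞ :=
  ⨆ (P0 : Measure X) (_ : P0 ∈ P) (P1 : Measure X) (_ : P1 ∈ P) (_ : d P0 P1 ≤ ε),
    ENNReal.ofReal |θ P0 - θ P1|

/-- Total variation modulus of continuity `ω_TV`. -/
noncomputable def omegaTV (P : Set (Measure X)) (θ : Measure X → ℝ) : ℝ → ℝ≥0∞ :=
  modulus dTV P θ

/-- Hellinger modulus of continuity `ω_H`. -/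
noncomputable def omegaH (P : Set (Measure X)) (θ : Measure X → ℝ) : ℝ → ℝ≥0∞ :=
  modulus dH P θ

/-- Push-forward of a measure through a channel `c` (given as a map into measures):
`(c P)(A) = ∫ c(A|x) dP(x)`. -/
noncomputable def push (c : X → Measure Z) (μ : Measure X) : Measure Z := μ.bind c

/-- Privatized Hellinger modulus `ω_H^{(Q1)}`. -/
noncomputable def omegaHQ (c : X → Measure Z) (P : Set (Measure X)) (θ : Measure X → ℝ) :
    ℝ → ℝ≥0∞ :=
  modulus (fun P0 P1 => dH (push c P0) (push c P1)) P θ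

/-- Left limit at `m ∈ ℝ≥0∞` of a nondecreasing `ℝ≥0∞`-valued function on `[0,∞)`:
`f(m⁻) = sup_{0 ≤ y < m} f(y)`. -/
noncomputable def leftLimE (f : ℝ → ℝ≥0∞) (m : ℝ≥0∞) : ℝ≥0∞ :=
  ⨆ (y : ℝ) (_ : 0 ≤ y) (_ : ENNReal.ofReal y < m), f y

/-- Right limit at `x ∈ ℝ` of a nondecreasing `ℝ≥0∞`-valued function:
`f(x⁺) = inf_{y > x} f(y)`. -/
noncomputable def rightLimE (f : ℝ → ℝ≥0∞) (x : ℝ) : ℝ≥0∞ :=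
  ⨅ (y : ℝ) (_ : x < y), f y

/-- Left limit of a nondecreasing loss function at `m ∈ ℝ≥0∞`, with the convention
`l(0⁻) = l(0)`, as an element of `ℝ≥0∞`. -/
noncomputable def lossLeftLim (l : ℝ → ℝ) (m : ℝ≥0∞) : ℝ≥0∞ :=
  if m = 0 then ENNReal.ofReal (l 0)
  else ⨆ (y : ℝ) (_ : 0 ≤ y) (_ : ENNReal.ofReal y < m), ENNReal.ofReal (l y)

/-- A (randomized) test is a measurable function with values in `[0,1]`. -/
def IsTest (φ : Ω → ℝ) : Prop := Measurable φ ∧ ∀ ω, 0 ≤ φ ω ∧ φ ω ≤ 1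

/-- Risk of a test: `∫ φ dμ0 + ∫ (1 - φ) dμ1`. -/
noncomputable def testRisk (μ0 μ1 : Measure Ω) (φ : Ω → ℝ) : ℝ :=
  (∫ ω, φ ω ∂μ0) + ∫ ω, (1 - φ ω) ∂μ1

/-- Testing affinity of a pair of measures: `π(μ0, μ1) = inf_φ (∫ φ dμ0 + ∫ (1-φ) dμ1)`. -/
noncomputable def pairAffinity (μ0 μ1 : Measure Ω) : ℝ :=
  sInf {r : ℝ | ∃ φ : Ω → ℝ, IsTest φ ∧ r = testRisk μ0 μ1 φ}

/-- Testing affinity of two sets of measures: `π(M0, M1) = sup π(μ0, μ1)`. -/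
noncomputable def setAffinity (M0 M1 : Set (Measure Ω)) : ℝ :=
  sSup {r : ℝ | ∃ μ0 ∈ M0, ∃ μ1 ∈ M1, r = pairAffinity μ0 μ1}

/-- The set of finite convex combinations of elements of `M`. -/
def convComb (M : Set (Measure Ω)) : Set (Measure Ω) :=
  {μ | ∃ (m : ℕ) (w : Fin m → ℝ≥0∞) (ν : Fin m → Measure Ω),
    (∑ i, w i) = 1 ∧ (∀ i, ν i ∈ M) ∧ μ = ∑ i, w i • ν i}

/-- The upper affinity `η_A^{(n)}(Q, Δ)`, for the channel described through the map
`QPn : P ↦ Q P^{⊗n}`. -/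
noncomputable def etaA {Zn : Type*} [MeasurableSpace Zn] (QPn : Measure X → Measure Zn)
    (P : Set (Measure X)) (θ : Measure X → ℝ) (Δ : ℝ) : ℝ :=
  ⨆ t : ℝ, setAffinity (convComb (QPn '' {μ | μ ∈ P ∧ θ μ ≤ t}))
    (convComb (QPn '' {μ | μ ∈ P ∧ t + Δ ≤ θ μ}))

/-- The affinity `η_2^{(n)}(Q, Δ)` (no convex hulls). -/
noncomputable def eta2 {Zn : Type*} [MeasurableSpace Zn] (QPn : Measure X → Measure Zn)
    (P : Set (Measure X)) (θ : Measure X → ℝ) (Δ : ℝ) : ℝ :=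
  ⨆ t : ℝ, setAffinity (QPn '' {μ | μ ∈ P ∧ θ μ ≤ t}) (QPn '' {μ | μ ∈ P ∧ t + Δ ≤ θ μ})

/-- `Δ_A^{(n)}(Q, η) = sup {Δ ≥ 0 : η_A^{(n)}(Q, Δ) > η}`, as an element of `ℝ≥0∞`. -/
noncomputable def DeltaA {Zn : Type*} [MeasurableSpace Zn] (QPn : Measure X → Measure Zn)
    (P : Set (Measure X)) (θ : Measure X → ℝ) (η : ℝ) : ℝ≥0∞ :=
  ⨆ (Δ : ℝ) (_ : 0 ≤ Δ) (_ : η < etaA QPn P θ Δ), ENNReal.ofReal Δ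

/-- `Δ_2^{(n)}(Q, η) = sup {Δ ≥ 0 : η_2^{(n)}(Q, Δ) > η}`, as an element of `ℝ≥0∞`. -/
noncomputable def Delta2 {Zn : Type*} [MeasurableSpace Zn] (QPn : Measure X → Measure Zn)
    (P : Set (Measure X)) (θ : Measure X → ℝ) (η : ℝ) : ℝ≥0∞ :=
  ⨆ (Δ : ℝ) (_ : 0 ≤ Δ) (_ : η < eta2 QPn P θ Δ), ENNReal.ofReal Δ

/-- The privatized distribution `Q P^{⊗n}` of the observation vector. -/
noncomputable def privProd {Zn : Type*} [MeasurableSpace Zn] (n : ℕ)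
    (Q : (Fin n → X) → Measure Zn) (μ : Measure X) : Measure Zn :=
  (Measure.pi fun _ : Fin n => μ).bind Q

/-- The `Q`-privatized minimax risk `M_n(Q, P, θ)` (with values in `ℝ≥0∞`), where the channel
is described through the map `QPn : P ↦ Q P^{⊗n}`. -/
noncomputable def minimaxRisk {Zn : Type*} [MeasurableSpace Zn] (l : ℝ → ℝ)
    (QPn : Measure X → Measure Zn) (P : Set (Measure X)) (θ : Measure X → ℝ) : ℝ≥0∞ :=
  ⨅ (est : Zn → ℝ) (_ : Measurable est), ⨆ (μ : Measure X) (_ : μ ∈ P),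
    ∫⁻ z, ENNReal.ofReal (l |est z - θ μ|) ∂(QPn μ)

/-- Iterated sequential integral: `seqIntegral K n x g` is
`∫ ⋯ ∫ g(z_1,…,z_n) K_{n-1}(dz_n | x_n, z_{1:n-1}) ⋯ K_0(dz_1 | x_1)`. -/
noncomputable def seqIntegral (K : (i : ℕ) → X × (Fin i → Z) → Measure Z) :
    (n : ℕ) → (Fin n → X) → ((Fin n → Z) → ℝ≥0∞) → ℝ≥0∞
  | 0, _, g => g fun i => i.elim0
  | n + 1, x, g => seqIntegral K n (fun i => x i.castSucc)
      fun zpre => ∫⁻ zn, g (Fin.snoc zpre zn) ∂(K n (x (Fin.last n), zpre))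

/-- An `α`-sequentially interactive channel: `Q` is obtained by sequential composition of
Markov kernels `K i : X × Z^i → Z`, each of which satisfies the `α`-differential privacy
ratio bound in its `X`-argument. -/
def IsSeqInteractive (n : ℕ) (α : ℝ) (Q : Kernel (Fin n → X) (Fin n → Z)) : Prop :=
  ∃ K : (i : ℕ) → Kernel (X × (Fin i → Z)) Z,
    (∀ i, IsMarkovKernel (K i)) ∧
    (∀ (i : ℕ) (x x' : X) (zpre : Fin i → Z) (A : Set Z), MeasurableSet A →
      K i (x, zpre) A ≤ ENNReal.ofReal (Real.exp α) * K i (x', zpre) A) ∧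
    (∀ (x : Fin n → X) (A : Set (Fin n → Z)), MeasurableSet A →
      Q x A = seqIntegral (fun i p => K i p) n x (A.indicator fun _ => 1))

/-- The `α`-private minimax risk `M_{n,α}(P, θ)`: infimum over all output dimensions
`q ∈ ℕ` and all `α`-sequentially interactive channels from `X^n` to `(ℝ^q)^n`. -/
noncomputable def privMinimaxRisk (n : ℕ) (α : ℝ) (l : ℝ → ℝ) (P : Set (Measure X))
    (θ : Measure X → ℝ) : ℝ≥0∞ :=
  ⨅ (q : ℕ) (Q : Kernel (Fin n → X) (Fin n → (Fin q → ℝ))) (_ : IsMarkovKernel Q)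
    (_ : IsSeqInteractive n α Q),
      minimaxRisk l (privProd n fun x => Q x) P θ

/-- The mixture `λ P0 + (1-λ) P1` of two measures. -/
noncomputable def mix (lam : ℝ) (P0 P1 : Measure Ω) : Measure Ω :=
  ENNReal.ofReal lam • P0 + ENNReal.ofReal (1 - lam) • P1

/-- Convexity of a set of measures. -/
def ConvexMeasureSet (P : Set (Measure Ω)) : Prop :=
  ∀ P0 ∈ P, ∀ P1 ∈ P, ∀ lam : ℝ, 0 ≤ lam → lam ≤ 1 → mix lam P0 P1 ∈ P

/-- Linearity of a functional on a (convex) set of measures. -/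
def LinearFunctional (P : Set (Measure X)) (θ : Measure X → ℝ) : Prop :=
  ∀ P0 ∈ P, ∀ P1 ∈ P, ∀ lam : ℝ, 0 ≤ lam → lam ≤ 1 →
    θ (mix lam P0 P1) = lam * θ P0 + (1 - lam) * θ P1

/-- A family of measures is dominated if all its members are absolutely continuous with
respect to a single σ-finite measure. -/
def Dominated (M : Set (Measure Ω)) : Prop :=
  ∃ ν : Measure Ω, SigmaFinite ν ∧ ∀ μ ∈ M, μ ≪ ν

/-- Condition (A): the functional `θ` is bounded on `P`. -/
def CondA (P : Set (Measure X)) (θ : Measure X → ℝ) : Prop := ∃ c : ℝ, ∀ μ ∈ P, |θ μ| ≤ c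

/-- Condition (B): the loss `l : [0,∞) → [0,∞)` is nondecreasing, `l 0 = 0` and
`l(3t/2) ≤ a l(t)` for all `t ≥ 0`. -/
def CondB (l : ℝ → ℝ) (a : ℝ) : Prop :=
  (∀ u v : ℝ, 0 ≤ u → u ≤ v → l u ≤ l v) ∧ (∀ u : ℝ, 0 ≤ u → 0 ≤ l u) ∧ l 0 = 0 ∧
    ∀ u : ℝ, 0 ≤ u → l (3 / 2 * u) ≤ a * l u

/-- Sup-norm of a (bounded) function. -/
noncomputable def supNorm (f : X → ℝ) : ℝ := ⨆ x, |f x|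

/-- The binary privatization channel `Q_1^{(α,ℓ)}`, supported on `{-z0, z0}` with
`z0 = ‖ℓ‖_∞ (e^α + 1)/(e^α - 1)`, giving the point `z0` probability `(1 + ℓ(x)/z0)/2`. -/
noncomputable def binChannel (α : ℝ) (ℓ : X → ℝ) (x : X) : Measure ℝ :=
  ENNReal.ofReal ((1 + ℓ x / (supNorm ℓ * ((Real.exp α + 1) / (Real.exp α - 1)))) / 2) •
      Measure.dirac (supNorm ℓ * ((Real.exp α + 1) / (Real.exp α - 1))) +
    ENNReal.ofReal ((1 - ℓ x / (supNorm ℓ * ((Real.exp α + 1) / (Real.exp α - 1)))) / 2) •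
      Measure.dirac (-(supNorm ℓ * ((Real.exp α + 1) / (Real.exp α - 1))))

/-- `g_d(Q, η) = inf { d(P0, P1) : π(Q P0^{⊗n}, Q P1^{⊗n}) ≤ η }`, as an element of `ℝ≥0∞`
(with `inf ∅ = ∞`). -/
noncomputable def gDist {Zn : Type*} [MeasurableSpace Zn] (d : Measure X → Measure X → ℝ)
    (QPn : Measure X → Measure Zn) (P : Set (Measure X)) (η : ℝ) : ℝ≥0∞ :=
  ⨅ (P0 : Measure X) (_ : P0 ∈ P) (P1 : Measure X) (_ : P1 ∈ P)
    (_ : pairAffinity (QPn P0) (QPn P1) ≤ η), ENNReal.ofReal (d P0 P1)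

/-- Integral of a bounded measurable function against a finite signed measure, via the
Jordan decomposition. -/
noncomputable def sInt (φ : Ω → ℝ) (σ : MeasureTheory.SignedMeasure Ω) : ℝ :=
  (∫ ω, φ ω ∂σ.toJordanDecomposition.posPart) - ∫ ω, φ ω ∂σ.toJordanDecomposition.negPart

/-- Membership in the set `𝕋 = {φ ∈ L∞(μ) : a ≤ ∫ φ f dμ ≤ b  ∀ f ∈ L1(μ), ‖f‖_{L1} ≤ 1}`. -/
def memT (μ : Measure Ω) (a b : ℝ) (φ : Ω → ℝ) : Prop :=
  Measurable φ ∧ (∃ c : ℝ, ∀ᵐ ω ∂μ, |φ ω| ≤ c) ∧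
    ∀ f : Ω → ℝ, Integrable f μ → (∫ ω, |f ω| ∂μ) ≤ 1 →
      a ≤ (∫ ω, φ ω * f ω ∂μ) ∧ (∫ ω, φ ω * f ω ∂μ) ≤ b

/-- The function `G(s,t) = log((1-s)/(1-t)) / log((t/s)·(1-s)/(1-t))`, with `G(s,s) = s`. -/
noncomputable def Gfun (s t : ℝ) : ℝ :=
  if s = t then s
  else Real.log ((1 - s) / (1 - t)) / Real.log (t / s * ((1 - s) / (1 - t)))

theorem l1_dual {X : Type*} [MeasurableSpace X] (ν : Measure X) [IsFiniteMeasure ν]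
    (F : Lp ℝ 1 ν →L[ℝ] ℝ) (c : ℝ) (hc : 0 ≤ c) (hF : ∀ f, F f ≤ c * ‖f‖) :
    ∃ h : X → ℝ, Measurable h ∧ (∀ x, |h x| ≤ c) ∧
      ∀ (f : X → ℝ) (hf : Integrable f ν), F (hf.toL1 f) = ∫ x, h x * f x ∂ν := by
  have hF' : ∀ f, |F f| ≤ c * ‖f‖ := by
    intro f
    rw [abs_le]
    have := hF (-f)
    rw [map_neg, norm_neg] at this
    exact ⟨by linarith, hF f⟩
  have hle : (1 : ℝ≥0∞) ≤ 2 := by norm_num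
  have hmem : ∀ f : Lp ℝ 2 ν, MemLp f 1 ν := fun f => (Lp.memLp f).mono_exponent hle
  let J : Lp ℝ 2 ν →ₗ[ℝ] ℝ :=
    { toFun := fun f => F ((hmem f).toLp f)
      map_add' := by
        intro f g
        rw [← map_add, ← MemLp.toLp_add]
        congr 1
        apply MemLp.toLp_congr
        exact Lp.coeFn_add f g
      map_smul' := by
        intro r f
        rw [RingHom.id_apply, ← map_smul, ← MemLp.toLp_const_smul]
        congr 1
        apply MemLp.toLp_congr
        exact Lp.coeFn_smul r f }
  let J' : Lp ℝ 2 ν →L[ℝ] ℝ := J.mkContinuous (c * (ν Set.univ).toReal ^ ((1:ℝ)/1 - 1/2)) (by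
    intro f
    refine (hF' _).trans ?_
    rw [mul_assoc]
    refine mul_le_mul_of_nonneg_left ?_ hc
    rw [Lp.norm_toLp, Lp.norm_def]
    have := eLpNorm_le_eLpNorm_mul_rpow_measure_univ (μ := ν) hle (Lp.aestronglyMeasurable f)
    have h2 := ENNReal.toReal_mono (ENNReal.mul_ne_top (Lp.eLpNorm_ne_top f) (by
      apply ENNReal.rpow_ne_top_of_nonneg
      · norm_num
      · exact measure_ne_top _ _)) this
    rw [ENNReal.toReal_mul, ← ENNReal.toReal_rpow] at h2
    simp only [ENNReal.toReal_one, ENNReal.toReal_ofNat] at h2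
    linarith)
  let g : Lp ℝ 2 ν := (InnerProductSpace.toDual ℝ (Lp ℝ 2 ν)).symm J'
  have hgm : Measurable g := (Lp.stronglyMeasurable g).measurable
  have hgi : Integrable g ν := memLp_one_iff_integrable.1 (hmem g)
  have hset : ∀ s : Set X, ∀ hs : MeasurableSet s,
      F (indicatorConstLp 1 hs (measure_ne_top ν s) (1:ℝ)) = ∫ x in s, g x ∂ν := by
    intro s hs
    rw [← L2.inner_indicatorConstLp_one hs (measure_ne_top ν s) g, real_inner_comm,
      InnerProductSpace.toDual_symm_apply]
    change _ = F _
    congr 1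
    unfold indicatorConstLp
    apply MemLp.toLp_congr
    exact (MemLp.coeFn_toLp _).symm
  have hbd : ∀ s : Set X, MeasurableSet s → |∫ x in s, g x ∂ν| ≤ c * ν.real s := by
    intro s hs
    rw [← hset s hs]
    refine (hF' _).trans ?_
    rw [norm_indicatorConstLp (by norm_num) (by norm_num)]
    simp
  have hup : ∀ᵐ x ∂ν, g x ≤ c := by
    refine ae_le_of_forall_setIntegral_le hgi (integrable_const c) ?_
    intro s hs _
    have := (abs_le.1 (hbd s hs)).2
    simpa [mul_comm] using this
  have hlo : ∀ᵐ x ∂ν, -c ≤ g x := by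
    refine ae_le_of_forall_setIntegral_le (integrable_const (-c)) hgi ?_
    intro s hs _
    have := (abs_le.1 (hbd s hs)).1
    simp only [setIntegral_const, smul_eq_mul]
    linarith
  let h : X → ℝ := fun x => max (-c) (min c (g x))
  have hhm : Measurable h := measurable_const.max (measurable_const.min hgm)
  have hhb : ∀ x, |h x| ≤ c := by
    intro x
    rw [abs_le]
    exact ⟨le_max_left _ _, max_le (by linarith) (min_le_left _ _)⟩
  have hhg : h =ᵐ[ν] g := by
    filter_upwards [hup, hlo] with x h1 h2
    simp [h, h1, h2]
  refine ⟨h, hhm, hhb, ?_⟩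
  have hmulInt : ∀ f : X → ℝ, Integrable f ν → Integrable (fun x => h x * f x) ν := by
    intro f hf
    exact hf.bdd_mul hhm.aestronglyMeasurable (Filter.Eventually.of_forall hhb)
  have key : ∀ f : Lp ℝ 1 ν, F f = ∫ x, h x * f x ∂ν := by
    intro f
    refine Lp.induction (by norm_num) (motive := fun f => F f = ∫ x, h x * f x ∂ν) ?_ ?_ ?_ f
    · intro r s hs hν
      have e : (Lp.simpleFunc.indicatorConst 1 hs hν.ne r : Lp ℝ 1 ν)
          = r • indicatorConstLp 1 hs (measure_ne_top ν s) (1:ℝ) := by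
        rw [Lp.simpleFunc.coe_indicatorConst]
        unfold indicatorConstLp
        rw [← MemLp.toLp_const_smul]
        apply MemLp.toLp_congr
        refine Filter.Eventually.of_forall fun x => ?_
        by_cases hx : x ∈ s <;> simp [hx]
      rw [e, map_smul, hset s hs, smul_eq_mul, ← integral_const_mul, ← integral_indicator hs]
      apply integral_congr_ae
      filter_upwards [hhg, Lp.coeFn_smul r (indicatorConstLp 1 hs (measure_ne_top ν s) (1:ℝ)),
        indicatorConstLp_coeFn (p := 1) (hs := hs) (hμs := measure_ne_top ν s) (c := (1:ℝ))]
        with x h1 h2 h3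
      rw [h1, h2, Pi.smul_apply, h3]
      by_cases hx : x ∈ s <;> simp [hx, mul_comm]
    · intro f g hf hg _ h1 h2
      rw [map_add, h1, h2, ← integral_add]
      · apply integral_congr_ae
        filter_upwards [Lp.coeFn_add (hf.toLp f) (hg.toLp g)] with x hx
        rw [hx, Pi.add_apply]; ring
      · exact hmulInt _ (L1.integrable_coeFn _)
      · exact hmulInt _ (L1.integrable_coeFn _)
    · apply isClosed_eq F.continuous
      have : ∀ f : Lp ℝ 1 ν, ∫ x, h x * f x ∂ν = ∫ x, h x * f x ∂ν := fun _ => rfl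
      rw [Metric.continuous_iff]
      intro b ε hε
      refine ⟨ε / (c + 1), by positivity, ?_⟩
      intro f hf
      rw [Real.dist_eq, ← integral_sub (hmulInt _ (L1.integrable_coeFn _)) (hmulInt _ (L1.integrable_coeFn _))]
      have h3 : |∫ x, (h x * f x - h x * b x) ∂ν| ≤ ∫ x, c * ‖f x - b x‖ ∂ν := by
        rw [← Real.norm_eq_abs]
        refine norm_integral_le_of_norm_le ?_ ?_
        · exact (((L1.integrable_coeFn f).sub (L1.integrable_coeFn b)).norm).const_mul c
        · refine Filter.Eventually.of_forall fun x => ?_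
          rw [← mul_sub, norm_mul]
          exact mul_le_mul_of_nonneg_right (hhb x) (norm_nonneg _)
      rw [integral_const_mul] at h3
      have h4 : dist f b = ∫ x, ‖f x - b x‖ ∂ν := by
        rw [dist_eq_norm, L1.norm_eq_integral_norm]
        apply integral_congr_ae
        filter_upwards [Lp.coeFn_sub f b] with x hx
        rw [hx, Pi.sub_apply]
      rw [← h4] at h3
      calc _ ≤ c * dist f b := h3
        _ ≤ (c + 1) * dist f b := by nlinarith [dist_nonneg (x := f) (y := b)]
        _ < (c+1) * (ε / (c+1)) := by gcongr
        _ = ε := by field_simp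
  intro f hf
  rw [key]
  apply integral_congr_ae
  filter_upwards [hf.coeFn_toL1] with x hx
  rw [hx]

theorem hb_sep {V : Type*} [NormedAddCommGroup V] [NormedSpace ℝ V] (S : Set (V × ℝ))
    (hconv : Convex ℝ S) (hne : S.Nonempty) (c : ℝ) (hc : 0 ≤ c)
    (hS : ∀ p ∈ S, p.2 ≤ c * ‖p.1‖) :
    ∃ F : V →L[ℝ] ℝ, (∀ v, F v ≤ c * ‖v‖) ∧ ∀ p ∈ S, p.2 ≤ F p.1 := by
  let B : Set (V × ℝ) := {p | c * ‖p.1‖ < p.2}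
  have hBo : IsOpen B := isOpen_lt (by fun_prop) (by fun_prop)
  have hBc : Convex ℝ B := by
    rintro ⟨v, r⟩ hv ⟨w, s⟩ hw a b ha hb hab
    simp only [B, Set.mem_setOf_eq, Prod.smul_mk, Prod.mk_add_mk, smul_eq_mul] at *
    have h1 : ‖a • v + b • w‖ ≤ a * ‖v‖ + b * ‖w‖ := by
      refine (norm_add_le _ _).trans ?_
      rw [norm_smul, norm_smul, Real.norm_of_nonneg ha, Real.norm_of_nonneg hb]
    have h2 : c * ‖a • v + b • w‖ ≤ a * (c * ‖v‖) + b * (c * ‖w‖) := by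
      calc _ ≤ c * (a * ‖v‖ + b * ‖w‖) := by gcongr
        _ = _ := by ring
    rcases ha.eq_or_lt with h | h
    · have : b = 1 := by linarith
      subst this; subst h
      linarith
    · have h3 := mul_lt_mul_of_pos_left hv h
      have h4 := mul_le_mul_of_nonneg_left hw.le hb
      linarith
  have hdis : Disjoint B S := by
    rw [Set.disjoint_left]
    intro p hp hp'
    exact absurd (hS p hp') (not_le.2 hp)
  obtain ⟨f, u, hfB, hfS⟩ := geometric_hahn_banach_open hBc hBo hconv hdis
  let g : V →L[ℝ] ℝ := f.comp (ContinuousLinearMap.inl ℝ V ℝ)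
  let γ : ℝ := f (0, 1)
  have hf : ∀ v r, f (v, r) = g v + γ * r := by
    intro v r
    have : ((v, r) : V × ℝ) = (v, 0) + r • ((0 : V), (1 : ℝ)) := by simp
    rw [this, map_add, map_smul]
    simp [g, γ, mul_comm]
  have hcone : ∀ v r, c * ‖v‖ < r → g v + γ * r ≤ 0 := by
    intro v r hr
    by_contra hcon
    push Not at hcon
    have hk : ∀ t : ℝ, 0 < t → t * (g v + γ * r) < u := by
      intro t ht
      have := hfB (t • v, t * r) (by
        simp only [B, Set.mem_setOf_eq, norm_smul, Real.norm_of_nonneg ht.le]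
        nlinarith)
      rw [hf] at this
      simp only [map_smul, smul_eq_mul] at this
      linarith
    have := hk ((|u| + 1) / (g v + γ * r)) (by positivity)
    rw [div_mul_cancel₀ _ hcon.ne'] at this
    linarith [le_abs_self u]
  have hu : 0 ≤ u := by
    by_contra hcon
    push Not at hcon
    have hk : ∀ t : ℝ, 0 < t → γ * t < u := by
      intro t ht
      have := hfB (0, t) (by simp [B, ht])
      rw [hf] at this
      simpa using this
    have h1 := hk 1 one_pos
    have h2 := hk (u / (2 * γ)) (div_pos_of_neg_of_neg hcon (by linarith))
    have h3 : γ * (u / (2 * γ)) = u / 2 := by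
      have : γ ≠ 0 := by linarith
      field_simp
    linarith
  have hγ0 : γ ≤ 0 := by
    have := hcone 0 1 (by simp)
    simpa using this
  have hγ : γ < 0 := by
    rcases hγ0.eq_or_lt with h | h
    · exfalso
      have h1 : ∀ v, g v ≤ 0 := by
        intro v
        have := hcone v (c * ‖v‖ + 1) (by linarith)
        rw [h] at this; simpa using this
      have h2 : ∀ v, g v = 0 := by
        intro v
        have := h1 (-v)
        rw [map_neg] at this
        linarith [h1 v]
      obtain ⟨⟨v, r⟩, hp⟩ := hne
      have h3 := hfS _ hp
      have h4 := hfB (0, 1) (by simp [B])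
      rw [hf, h2, h] at h3 h4
      linarith
    · exact h
  refine ⟨(-γ)⁻¹ • g, ?_, ?_⟩
  · intro v
    have h1 : ∀ r, c * ‖v‖ < r → (-γ)⁻¹ * g v ≤ r := by
      intro r hr
      have := hcone v r hr
      rw [inv_mul_le_iff₀ (by linarith)]
      linarith
    simp only [ContinuousLinearMap.smul_apply, smul_eq_mul]
    exact le_of_forall_gt_imp_ge_of_dense h1
  · rintro ⟨v, r⟩ hp
    have := hfS _ hp
    rw [hf] at this
    simp only [ContinuousLinearMap.smul_apply, smul_eq_mul]
    rw [le_inv_mul_iff₀ (by linarith)]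
    linarith

theorem bias_lemma {X : Type*} [MeasurableSpace X] 
    (P : Set (Measure X)) (hP : ∀ μ ∈ P, IsProbabilityMeasure μ) (hne : P.Nonempty)
    (θ : Measure X → ℝ) (hA : CondA P θ)
    (hconv : ConvexMeasureSet P) (hdom : Dominated P) (hlin : LinearFunctional P θ)
    (W c : ℝ) (hc : 0 ≤ c)
    (hmod : ∀ P0 ∈ P, ∀ P1 ∈ P, θ P0 - θ P1 ≤ W + c * dTV P0 P1) :
    ∃ (h : X → ℝ) (b : ℝ), Measurable h ∧ (∀ x, |h x| ≤ c) ∧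
      ∀ μ ∈ P, |(∫ x, h x ∂μ) + b - θ μ| ≤ W / 2 := by
  classical
  obtain ⟨ν', hν', hac'⟩ := hdom
  let ν : Measure X := ν'.toFinite
  have hac : ∀ μ ∈ P, μ ≪ ν := fun μ hμ => (hac' μ hμ).trans (absolutelyContinuous_toFinite ν')
  have hri : ∀ μ ∈ P, Integrable (fun x => (μ.rnDeriv ν x).toReal) ν := by
    intro μ hμ
    have := hP μ hμ
    exact Measure.integrable_toReal_rnDeriv
  let d : Measure X → Lp ℝ 1 ν := fun μ =>
    if hμ : μ ∈ P then (hri μ hμ).toL1 _ else 0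
  have hd : ∀ μ (hμ : μ ∈ P), d μ = (hri μ hμ).toL1 _ := by
    intro μ hμ
    simp [d, hμ]
  have hdae : ∀ μ ∈ P, d μ =ᵐ[ν] fun x => (μ.rnDeriv ν x).toReal := by
    intro μ hμ
    rw [hd μ hμ]
    exact Integrable.coeFn_toL1 _
  have hdmix : ∀ P0 ∈ P, ∀ P1 ∈ P, ∀ a b : ℝ, 0 ≤ a → 0 ≤ b → a + b = 1 →
      d (mix a P0 P1) = a • d P0 + b • d P1 := by
    intro P0 h0 P1 h1 a b ha hb hab
    have := hP P0 h0
    have := hP P1 h1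
    have hm := hconv P0 h0 P1 h1 a ha (by linarith)
    have hb' : 1 - a = b := by linarith
    apply Lp.ext
    have i0 : IsFiniteMeasure (ENNReal.ofReal a • P0) := Measure.smul_finite _ (by simp)
    have i1 : IsFiniteMeasure (ENNReal.ofReal b • P1) := Measure.smul_finite _ (by simp)
    have e1 : (mix a P0 P1).rnDeriv ν =ᵐ[ν]
        fun x => ENNReal.ofReal a * P0.rnDeriv ν x + ENNReal.ofReal b * P1.rnDeriv ν x := by
      unfold mix
      rw [hb']
      filter_upwards [Measure.rnDeriv_add (ENNReal.ofReal a • P0) (ENNReal.ofReal b • P1) ν,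
        Measure.rnDeriv_smul_left_of_ne_top P0 ν (r := ENNReal.ofReal a) (by simp),
        Measure.rnDeriv_smul_left_of_ne_top P1 ν (r := ENNReal.ofReal b) (by simp)] with x k1 k2 k3
      rw [k1, Pi.add_apply, k2, k3]
      simp
    filter_upwards [hdae _ hm, hdae _ h0, hdae _ h1, e1, Lp.coeFn_add (a • d P0) (b • d P1),
      Lp.coeFn_smul a (d P0), Lp.coeFn_smul b (d P1), Measure.rnDeriv_lt_top P0 ν,
      Measure.rnDeriv_lt_top P1 ν] with x k1 k2 k3 k4 k5 k6 k7 k8 k9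
    rw [k1, k5, Pi.add_apply, k6, k7, Pi.smul_apply, Pi.smul_apply, k2, k3, k4,
      ENNReal.toReal_add (ENNReal.mul_ne_top (by simp) k8.ne) (ENNReal.mul_ne_top (by simp) k9.ne)]
    simp [ENNReal.toReal_mul, ha, hb]
  have htv : ∀ P0 ∈ P, ∀ P1 ∈ P, dTV P0 P1 ≤ ‖d P0 - d P1‖ := by
    intro P0 h0 P1 h1
    have := hP P0 h0
    have := hP P1 h1
    have : Nonempty {A : Set X // MeasurableSet A} := ⟨⟨∅, MeasurableSet.empty⟩⟩
    refine ciSup_le ?_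
    rintro ⟨A, hAm⟩
    have e : ∀ μ (hμ : μ ∈ P), (μ A).toReal = ∫ x in A, d μ x ∂ν := by
      intro μ hμ
      have := hP μ hμ
      rw [setIntegral_congr_ae (g := fun x => (μ.rnDeriv ν x).toReal) hAm
        ((hdae μ hμ).mono fun x hx _ => hx), Measure.setIntegral_toReal_rnDeriv (hac μ hμ)]
      rfl
    simp only
    rw [e P0 h0, e P1 h1, ← integral_sub (L1.integrable_coeFn _).integrableOn
      (L1.integrable_coeFn _).integrableOn, ← Real.norm_eq_abs]
    refine (norm_integral_le_integral_norm _).trans ?_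
    rw [L1.norm_eq_integral_norm]
    refine (setIntegral_le_integral ?_ ?_).trans_eq ?_
    · exact ((L1.integrable_coeFn (d P0)).sub (L1.integrable_coeFn (d P1))).norm
    · exact Filter.Eventually.of_forall fun x => norm_nonneg _
    · apply integral_congr_ae
      filter_upwards [Lp.coeFn_sub (d P0) (d P1)] with x hx
      rw [hx, Pi.sub_apply]
  let S : Set (Lp ℝ 1 ν × ℝ) :=
    {p | ∃ P0 ∈ P, ∃ P1 ∈ P, p = (d P0 - d P1, θ P0 - θ P1 - W)}
  obtain ⟨F, hF1, hF2⟩ := hb_sep S (by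
      rintro _ ⟨P0, h0, P1, h1, rfl⟩ _ ⟨P2, h2, P3, h3, rfl⟩ a b ha hb hab
      have ha1 : a ≤ 1 := by linarith
      have hb' : 1 - a = b := by linarith
      refine ⟨mix a P0 P2, hconv _ h0 _ h2 a ha ha1, mix a P1 P3, hconv _ h1 _ h3 a ha ha1, ?_⟩
      rw [hdmix _ h0 _ h2 a b ha hb hab, hdmix _ h1 _ h3 a b ha hb hab,
        hlin _ h0 _ h2 a ha ha1, hlin _ h1 _ h3 a ha ha1, hb']
      simp only [Prod.smul_mk, Prod.mk_add_mk, smul_eq_mul]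
      congr 1
      · module
      · have : b = 1 - a := by linarith
        rw [this]; ring)
    (by
      obtain ⟨μ, hμ⟩ := hne
      exact ⟨_, μ, hμ, μ, hμ, rfl⟩) c hc (by
      rintro _ ⟨P0, h0, P1, h1, rfl⟩
      have := hmod P0 h0 P1 h1
      have := mul_le_mul_of_nonneg_left (htv P0 h0 P1 h1) hc
      simp only
      linarith)
  obtain ⟨h, hm, hb, hrep⟩ := l1_dual ν F c hc hF1
  have hFd : ∀ μ ∈ P, F (d μ) = ∫ x, h x ∂μ := by
    intro μ hμ
    have := hP μ hμ
    rw [hd μ hμ, hrep, ← integral_rnDeriv_smul (hac μ hμ)]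
    simp [mul_comm]
  let D : P → ℝ := fun μ => θ μ - ∫ x, h x ∂(μ : Measure X)
  have hD : ∀ μ μ' : P, D μ - D μ' ≤ W := by
    rintro ⟨μ, hμ⟩ ⟨μ', hμ'⟩
    have := hF2 _ ⟨μ, hμ, μ', hμ', rfl⟩
    simp only [map_sub] at this
    rw [hFd μ hμ, hFd μ' hμ'] at this
    simp only [D]
    linarith
  have : Nonempty P := hne.to_subtype
  obtain ⟨μ₀⟩ := this
  have hbA : BddAbove (Set.range D) := ⟨D μ₀ + W, by
    rintro _ ⟨μ, rfl⟩; linarith [hD μ μ₀]⟩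
  have : Nonempty P := ⟨μ₀⟩
  refine ⟨h, (⨆ μ, D μ) - W / 2, hm, hb, ?_⟩
  intro μ hμ
  have h1 : D ⟨μ, hμ⟩ ≤ ⨆ μ, D μ := le_ciSup hbA _
  have h2 : ⨆ μ, D μ ≤ D ⟨μ, hμ⟩ + W := ciSup_le fun μ' => by linarith [hD μ' ⟨μ, hμ⟩]
  simp only [D] at h1 h2
  rw [abs_le]
  constructor <;> simp only [D] <;> linarith

/-- The two-point measure on `±1` with mean `p`. -/
noncomputable def bm (p : ℝ) : Measure (Fin 1 → ℝ) :=
  ENNReal.ofReal ((1 + p) / 2) • Measure.dirac (fun _ => 1) +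
    ENNReal.ofReal ((1 - p) / 2) • Measure.dirac (fun _ => -1)

theorem bm_prob (p : ℝ) (hp : |p| ≤ 1) : IsProbabilityMeasure (bm p) := by
  constructor
  rw [abs_le] at hp
  simp only [bm, Measure.add_apply, Measure.smul_apply, measure_univ, smul_eq_mul, mul_one]
  rw [← ENNReal.ofReal_add (by linarith) (by linarith)]
  rw [show (1 + p) / 2 + (1 - p) / 2 = 1 by ring, ENNReal.ofReal_one]

theorem lintegral_bm (p : ℝ) (f : (Fin 1 → ℝ) → ℝ≥0∞) (hf : Measurable f) :
    ∫⁻ z, f z ∂(bm p) = ENNReal.ofReal ((1 + p) / 2) * f (fun _ => 1) +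
      ENNReal.ofReal ((1 - p) / 2) * f (fun _ => -1) := by
  simp only [bm, lintegral_add_measure, lintegral_smul_measure, lintegral_dirac' _ hf, smul_eq_mul]

theorem measurable_bm {Y : Type*} [MeasurableSpace Y] (h : Y → ℝ) (hm : Measurable h) :
    Measurable fun x => bm (h x) := by
  refine Measure.measurable_of_measurable_coe _ fun s hs => ?_
  simp only [bm, Measure.add_apply, Measure.smul_apply, smul_eq_mul]
  fun_prop

theorem bind_bm {X : Type*} [MeasurableSpace X] (μ : Measure X) [IsProbabilityMeasure μ]
    (h : X → ℝ) (hm : Measurable h) (hb : ∀ x, |h x| ≤ 1) :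
    μ.bind (fun x => bm (h x)) = bm (∫ x, h x ∂μ) := by
  have hi : Integrable h μ := Integrable.of_bound hm.aestronglyMeasurable 1
    (Filter.Eventually.of_forall hb)
  have e1 : ∫⁻ x, ENNReal.ofReal ((1 + h x) / 2) ∂μ = ENNReal.ofReal ((1 + ∫ x, h x ∂μ) / 2) := by
    rw [← ofReal_integral_eq_lintegral_ofReal]
    · rw [integral_div, integral_add (integrable_const _) hi]
      simp
    · exact ((integrable_const _).add hi).div_const _
    · exact Filter.Eventually.of_forall fun x => by
        have := abs_le.1 (hb x)
        simp only [Pi.zero_apply]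
        linarith
  have e2 : ∫⁻ x, ENNReal.ofReal ((1 - h x) / 2) ∂μ = ENNReal.ofReal ((1 - ∫ x, h x ∂μ) / 2) := by
    rw [← ofReal_integral_eq_lintegral_ofReal]
    · rw [integral_div, integral_sub (integrable_const _) hi]
      simp
    · exact ((integrable_const _).sub hi).div_const _
    · exact Filter.Eventually.of_forall fun x => by
        have := abs_le.1 (hb x)
        simp only [Pi.zero_apply]
        linarith
  ext s hs
  rw [Measure.bind_apply hs (measurable_bm h hm).aemeasurable]
  simp only [bm, Measure.add_apply, Measure.smul_apply, smul_eq_mul]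
  rw [lintegral_add_left (by fun_prop), lintegral_mul_const _ (by fun_prop),
    lintegral_mul_const _ (by fun_prop), e1, e2]

theorem lintegral_snoc {Z : Type*} [MeasurableSpace Z] (n : ℕ) (μ : Fin (n + 1) → Measure Z)
    [∀ i, SigmaFinite (μ i)] (g : (Fin (n + 1) → Z) → ℝ≥0∞) (hg : Measurable g) :
    ∫⁻ z, g z ∂(Measure.pi μ) =
      ∫⁻ zpre, ∫⁻ zn, g (Fin.snoc (α := fun _ => Z) zpre zn) ∂(μ (Fin.last n))
        ∂(Measure.pi fun i : Fin n => μ i.castSucc) := by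
  have hmp := (measurePreserving_piFinSuccAbove μ (Fin.last n)).symm
  rw [← hmp.lintegral_comp hg, lintegral_prod_symm]
  · simp [MeasurableEquiv.piFinSuccAbove_symm_apply, Fin.insertNthEquiv, Fin.insertNth_last']
  · exact (hg.comp (MeasurableEquiv.measurable _)).aemeasurable

theorem lintegral_pi_prod {Z : Type*} [MeasurableSpace Z] (n : ℕ) (μ : Fin n → Measure Z)
    [∀ i, SigmaFinite (μ i)] (f : Fin n → Z → ℝ≥0∞) (hf : ∀ i, Measurable (f i)) :
    ∫⁻ z, ∏ i, f i (z i) ∂(Measure.pi μ) = ∏ i, ∫⁻ z, f i z ∂(μ i) := by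
  induction n with
  | zero => simp
  | succ n ih =>
    rw [lintegral_snoc _ _ _ (by fun_prop)]
    simp only [Fin.prod_univ_castSucc, Fin.snoc_castSucc, Fin.snoc_last]
    simp_rw [lintegral_const_mul _ (hf (Fin.last n))]
    rw [lintegral_mul_const _ (by fun_prop), ih _ _ (fun i => hf _)]

theorem measurable_snoc {Z Y : Type*} [MeasurableSpace Z] [MeasurableSpace Y] (n : ℕ)
    (f : Y → Fin n → Z) (hf : Measurable f) (g : Y → Z) (hg : Measurable g) :
    Measurable fun y => (Fin.snoc (α := fun _ => Z) (f y) (g y) : Fin (n + 1) → Z) := by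
  rw [measurable_pi_iff]
  intro i
  refine Fin.lastCases ?_ (fun j => ?_) i
  · simpa using hg
  · simp only [Fin.snoc_castSucc]
    exact (measurable_pi_apply j).comp hf

theorem seqIntegral_eq {X Z : Type*} [MeasurableSpace X] [MeasurableSpace Z]
    (κ : X → Measure Z) (hκ : ∀ x, IsProbabilityMeasure (κ x)) (n : ℕ) (x : Fin n → X)
    (g : (Fin n → Z) → ℝ≥0∞) (hg : Measurable g) :
    seqIntegral (fun _ p => κ p.1) n x g = ∫⁻ z, g z ∂(Measure.pi fun i => κ (x i)) := by
  induction n with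
  | zero =>
    simp only [seqIntegral]
    rw [lintegral_unique]
    simp
    congr 1
  | succ n ih =>
    simp only [seqIntegral]
    rw [ih, lintegral_snoc _ _ _ hg]
    exact Measurable.lintegral_prod_right'
      (f := fun p : (Fin n → Z) × Z => g (Fin.snoc (α := fun _ => Z) p.1 p.2))
      (hg.comp (measurable_snoc n _ measurable_fst _ measurable_snd))

theorem measurable_pi_kernel {X Z : Type*} [MeasurableSpace X] [MeasurableSpace Z]
    (κ : X → Measure Z) (hκm : Measurable κ) (hκ : ∀ x, IsProbabilityMeasure (κ x)) (n : ℕ) :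
    Measurable fun x : Fin n → X => Measure.pi fun i => κ (x i) := by
  refine Measurable.measure_of_isPiSystem_of_isProbabilityMeasure (generateFrom_pi).symm
    isPiSystem_pi ?_
  rintro _ ⟨A, hA, rfl⟩
  simp only [Measure.pi_pi]
  refine Finset.measurable_prod _ fun i _ => ?_
  exact (Measure.measurable_coe (hA i (Set.mem_univ i))).comp (hκm.comp (measurable_pi_apply i))

theorem pi_bind {X Z : Type*} [MeasurableSpace X] [MeasurableSpace Z]
    (κ : X → Measure Z) (hκm : Measurable κ) (hκ : ∀ x, IsProbabilityMeasure (κ x)) (n : ℕ)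
    (μ : Measure X) [IsProbabilityMeasure μ] (ρ : Measure Z) [IsProbabilityMeasure ρ]
    (hρ : μ.bind κ = ρ) :
    (Measure.pi fun _ : Fin n => μ).bind (fun x => Measure.pi fun i => κ (x i)) =
      Measure.pi fun _ : Fin n => ρ := by
  symm
  refine Measure.pi_eq fun A hA => ?_
  rw [Measure.bind_apply (MeasurableSet.univ_pi hA) (measurable_pi_kernel κ hκm hκ n).aemeasurable]
  simp only [Measure.pi_pi]
  rw [lintegral_pi_prod n _ (fun i x => κ x (A i)) 
    (fun i => (Measure.measurable_coe (hA i)).comp hκm)]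
  refine Finset.prod_congr rfl fun i _ => ?_
  rw [← hρ, Measure.bind_apply (hA i) hκm.aemeasurable]

theorem priv_le {X : Type*} [MeasurableSpace X] (α : ℝ) (hα : 0 < α) (n : ℕ)
    (P : Set (Measure X)) (hP : ∀ μ ∈ P, IsProbabilityMeasure μ) (θ : Measure X → ℝ)
    (l : ℝ → ℝ) (h : X → ℝ) (hm : Measurable h)
    (hb : ∀ x, |h x| ≤ (Real.exp α - 1) / (Real.exp α + 1))
    (est : (Fin n → (Fin 1 → ℝ)) → ℝ) (hest : Measurable est) (R : ℝ≥0∞)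
    (hR : ∀ μ ∈ P, ∫⁻ z, ENNReal.ofReal (l |est z - θ μ|)
      ∂(Measure.pi fun _ : Fin n => bm (∫ x, h x ∂μ)) ≤ R) :
    privMinimaxRisk n α l P θ ≤ R := by
  have he : 1 < Real.exp α := Real.one_lt_exp_iff.2 hα
  have hr1 : (Real.exp α - 1) / (Real.exp α + 1) ≤ 1 := by
    rw [div_le_one (by positivity)]; linarith
  have hb1 : ∀ x, |h x| ≤ 1 := fun x => (hb x).trans hr1
  have hκ : ∀ x, IsProbabilityMeasure (bm (h x)) := fun x => bm_prob _ (hb1 x)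
  let Q : Kernel (Fin n → X) (Fin n → (Fin 1 → ℝ)) :=
    ⟨fun x => Measure.pi fun i => bm (h (x i)),
      measurable_pi_kernel _ (measurable_bm h hm) hκ n⟩
  have hQ : IsMarkovKernel Q := ⟨fun x => by
    change IsProbabilityMeasure (Measure.pi fun i => bm (h (x i)))
    infer_instance⟩
  have hS : IsSeqInteractive n α Q := by
    refine ⟨fun i => ⟨fun p => bm (h p.1), measurable_bm _ (hm.comp measurable_fst)⟩, ?_, ?_, ?_⟩
    · intro i
      exact ⟨fun p => hκ p.1⟩
    · intro i x x' zpre A hA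
      change bm (h x) A ≤ _ * bm (h x') A
      have hx := abs_le.1 (hb x)
      have hx' := abs_le.1 (hb x')
      have hlow : ∀ t : ℝ, -((Real.exp α - 1) / (Real.exp α + 1)) ≤ t →
          1 / (Real.exp α + 1) ≤ (1 + t) / 2 := by
        intro t ht
        have : (Real.exp α - 1) / (Real.exp α + 1) = 1 - 2 * (1 / (Real.exp α + 1)) := by
          field_simp; ring
        rw [this] at ht
        linarith
      have hup : ∀ t : ℝ, t ≤ (Real.exp α - 1) / (Real.exp α + 1) →
          (1 + t) / 2 ≤ Real.exp α * (1 / (Real.exp α + 1)) := by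
        intro t ht
        have h1 : (Real.exp α - 1) / (Real.exp α + 1) = 1 - 2 * (1 / (Real.exp α + 1)) := by
          field_simp; ring
        have h2 : Real.exp α * (1 / (Real.exp α + 1)) = 1 - (1 / (Real.exp α + 1)) := by
          field_simp; ring
        rw [h1] at ht
        rw [h2]
        linarith
      have key : ∀ s t : ℝ, s ≤ (Real.exp α - 1) / (Real.exp α + 1) →
          -((Real.exp α - 1) / (Real.exp α + 1)) ≤ t →
          ENNReal.ofReal ((1 + s) / 2) ≤ ENNReal.ofReal (Real.exp α) *
            ENNReal.ofReal ((1 + t) / 2) := by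
        intro s t hs ht
        rw [← ENNReal.ofReal_mul (by positivity)]
        apply ENNReal.ofReal_le_ofReal
        refine (hup s hs).trans ?_
        exact mul_le_mul_of_nonneg_left (hlow t ht) (by positivity)
      simp only [bm, Measure.add_apply, Measure.smul_apply, smul_eq_mul]
      rw [mul_add, ← mul_assoc, ← mul_assoc]
      gcongr
      · exact key _ _ hx.2 hx'.1
      · rw [sub_eq_add_neg, sub_eq_add_neg]
        exact key _ _ (by linarith) (by linarith)
    · intro x A hA
      change Measure.pi (fun i => bm (h (x i))) A =
        seqIntegral (fun _ p => (fun x => bm (h x)) p.1) n x _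
      rw [seqIntegral_eq (fun x => bm (h x)) hκ n x _ (measurable_const.indicator hA),
        lintegral_indicator hA]
      simp
  unfold privMinimaxRisk
  refine iInf_le_of_le 1 (iInf_le_of_le Q (iInf_le_of_le hQ (iInf_le_of_le hS ?_)))
  unfold minimaxRisk
  refine iInf_le_of_le est (iInf_le_of_le hest (iSup_le fun μ => iSup_le fun hμ => ?_))
  have := hP μ hμ
  have hmean : |∫ x, h x ∂μ| ≤ 1 := by
    have := norm_integral_le_of_norm_le_const (μ := μ) (f := h) (C := 1)
      (Filter.Eventually.of_forall hb1)
    simpa using this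
  have := bm_prob _ hmean
  have e : privProd n (fun x => Q x) μ = Measure.pi fun _ : Fin n => bm (∫ x, h x ∂μ) :=
    pi_bind (fun x => bm (h x)) (measurable_bm h hm) hκ n μ _ (bind_bm μ h hm hb1)
  rw [e]
  exact hR μ hμ

theorem loss_pow (l : ℝ → ℝ) (a : ℝ) (ha : 1 < a) (hB : CondB l a) (ω : ℝ) (hω : 0 ≤ ω) (k : ℕ) :
    l ((3 / 2) ^ k * ω) ≤ a ^ k * l ω := by
  induction k with
  | zero => simp
  | succ k ih =>
    rw [pow_succ', pow_succ', mul_assoc, mul_assoc]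
    exact (hB.2.2.2 _ (by positivity)).trans (mul_le_mul_of_nonneg_left ih (by linarith))

theorem loss_bound (l : ℝ → ℝ) (a : ℝ) (ha : 1 < a) (hB : CondB l a) (ω : ℝ) (hω : 0 < ω)
    (M : ℕ) (hM : 2 * Real.log (2 * a) + 1 ≤ (3 / 2 : ℝ) ^ M) (T y : ℝ) (hT : 0 ≤ T) (hy : 0 ≤ y)
    (hyT : y ≤ (1 / 2 + T) * ω) :
    l y ≤ a ^ (M + 1) * l ω * (1 + Real.exp T) := by
  have hl0 : 0 ≤ l ω := hB.2.1 ω hω.le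
  have ha0 : 0 < a := by linarith
  have hmono : l y ≤ l ((1 / 2 + T) * ω) := hB.1 _ _ hy hyT
  have hL : Real.log a ≤ Real.log (2 * a) := Real.log_le_log ha0 (by linarith)
  have hL0 : 0 ≤ Real.log (2 * a) := Real.log_nonneg (by linarith)
  refine hmono.trans ?_
  by_cases hu : 1 / 2 + T ≤ (3 / 2) ^ M
  · have h1 : l ((1 / 2 + T) * ω) ≤ l ((3 / 2) ^ M * ω) :=
      hB.1 _ _ (by positivity) (by gcongr)
    have h2 := loss_pow l a ha hB ω hω.le M
    have h3 : a ^ M ≤ a ^ (M + 1) := pow_le_pow_right₀ ha.le (by omega)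
    have h4 : a ^ M * l ω ≤ a ^ (M + 1) * l ω := by gcongr
    have h5 : 0 ≤ a ^ (M + 1) * l ω := by positivity
    have h6 := Real.exp_pos T
    nlinarith
  · push Not at hu
    have hpos : (0 : ℝ) < (3 / 2) ^ M := by positivity
    obtain ⟨j, hj1, hj2⟩ := exists_nat_pow_near (x := (1 / 2 + T) / (3 / 2) ^ M) (y := 3 / 2)
      (by rw [one_le_div hpos]; exact hu.le) (by norm_num)
    rw [le_div_iff₀ hpos] at hj1
    rw [div_lt_iff₀ hpos] at hj2
    have h1 : l ((1 / 2 + T) * ω) ≤ l ((3 / 2) ^ (j + 1 + M) * ω) := by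
      refine hB.1 _ _ (by positivity) ?_
      rw [pow_add]
      gcongr
    have h2 := loss_pow l a ha hB ω hω.le (j + 1 + M)
    have hbern : 1 + (j : ℝ) * (1 / 2) ≤ (3 / 2) ^ j := by
      have := one_add_mul_le_pow (a := (1 / 2 : ℝ)) (by norm_num) j
      norm_num at this ⊢
      linarith
    have h3 : (j : ℝ) * Real.log a ≤ T := by
      have hj0 : (0 : ℝ) ≤ j := by positivity
      have h4 : (1 + (j : ℝ) * (1 / 2)) * (2 * Real.log (2 * a) + 1) ≤ (3 / 2) ^ j * (3 / 2) ^ M := by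
        gcongr
      have h5 : (j : ℝ) * Real.log a ≤ j * Real.log (2 * a) := by gcongr
      nlinarith
    have h4 : a ^ j ≤ Real.exp T := by
      rw [← Real.exp_log (pow_pos ha0 j), Real.log_pow]
      exact Real.exp_le_exp.2 h3
    calc l ((1 / 2 + T) * ω) ≤ a ^ (j + 1 + M) * l ω := h1.trans h2
      _ = a ^ (M + 1) * l ω * a ^ j := by ring
      _ ≤ a ^ (M + 1) * l ω * (1 + Real.exp T) := by
        gcongr
        linarith

theorem mgf_one (p t : ℝ) (hp : |p| ≤ 1) (ht : |t| ≤ 1 / 2) :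
    ∫⁻ z, ENNReal.ofReal (Real.exp (t * (z 0 - p))) ∂(bm p) ≤
      ENNReal.ofReal (Real.exp (4 * t ^ 2)) := by
  have hpp := abs_le.1 hp
  have hexp : ∀ x : ℝ, |x| ≤ 2 * |t| → Real.exp x ≤ x + Real.exp (4 * t ^ 2) := by
    intro x hx
    have h1 := (abs_le.1 (Real.abs_exp_sub_one_sub_id_le (x := x) (by linarith))).2
    have h2 := Real.add_one_le_exp (4 * t ^ 2)
    have h3 : x ^ 2 ≤ 4 * t ^ 2 := by
      rw [← sq_abs x, ← sq_abs t]
      nlinarith [abs_nonneg x, abs_nonneg t]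
    linarith
  rw [lintegral_bm _ _ (by fun_prop), ← ENNReal.ofReal_mul (by linarith),
    ← ENNReal.ofReal_mul (by linarith), ← ENNReal.ofReal_add
    (mul_nonneg (by linarith) (Real.exp_nonneg _)) (mul_nonneg (by linarith) (Real.exp_nonneg _))]
  apply ENNReal.ofReal_le_ofReal
  have h1 := hexp (t * (1 - p)) (by
    rw [abs_mul, mul_comm]
    exact mul_le_mul_of_nonneg_right (abs_le.2 ⟨by linarith, by linarith⟩) (abs_nonneg t))
  have h2 := hexp (t * (-1 - p)) (by
    rw [abs_mul, mul_comm]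
    exact mul_le_mul_of_nonneg_right (abs_le.2 ⟨by linarith, by linarith⟩) (abs_nonneg t))
  have h3 := mul_le_mul_of_nonneg_left h1 (show 0 ≤ (1 + p) / 2 by linarith)
  have h4 := mul_le_mul_of_nonneg_left h2 (show 0 ≤ (1 - p) / 2 by linarith)
  nlinarith

theorem mgf_n (n : ℕ) (p t : ℝ) (hp : |p| ≤ 1) (ht : |t| ≤ 1 / 2) (htn : n * (4 * t ^ 2) ≤ 1) :
    ∫⁻ z, ENNReal.ofReal (Real.exp (t * ∑ i : Fin n, (z i 0 - p)))
      ∂(Measure.pi fun _ : Fin n => bm p) ≤ ENNReal.ofReal (Real.exp 1) := by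
  have := bm_prob p hp
  have e : ∀ z : Fin n → Fin 1 → ℝ, ENNReal.ofReal (Real.exp (t * ∑ i : Fin n, (z i 0 - p))) =
      ∏ i, ENNReal.ofReal (Real.exp (t * (z i 0 - p))) := by
    intro z
    rw [Finset.mul_sum, Real.exp_sum, ENNReal.ofReal_prod_of_nonneg]
    exact fun i _ => Real.exp_nonneg _
  simp_rw [e]
  rw [lintegral_pi_prod n (fun _ => bm p)
    (fun _ z => ENNReal.ofReal (Real.exp (t * (z 0 - p)))) (fun i => by fun_prop)]
  refine (Finset.prod_le_prod' fun i _ => mgf_one p t hp ht).trans ?_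
  rw [Finset.prod_const, Finset.card_univ, Fintype.card_fin, ← ENNReal.ofReal_pow (Real.exp_nonneg _),
    ← Real.exp_nat_mul]
  exact ENNReal.ofReal_le_ofReal (Real.exp_le_exp.2 htn)

theorem dTV_mix {X : Type*} [MeasurableSpace X] (P0 P1 : Measure X) [IsProbabilityMeasure P0]
    [IsProbabilityMeasure P1] (lam : ℝ) (h0 : 0 ≤ lam) (h1 : lam ≤ 1) :
    dTV (mix lam P0 P1) P1 ≤ lam * dTV P0 P1 := by
  have : Nonempty {A : Set X // MeasurableSet A} := ⟨⟨∅, MeasurableSet.empty⟩⟩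
  have hbd : BddAbove (Set.range fun A : {A : Set X // MeasurableSet A} =>
      |(P0 A.1).toReal - (P1 A.1).toReal|) := by
    refine ⟨1, ?_⟩
    rintro _ ⟨A, rfl⟩
    have k0 : P0.real A.1 ≤ 1 := measureReal_le_one
    have k1 : P1.real A.1 ≤ 1 := measureReal_le_one
    have k2 : 0 ≤ P0.real A.1 := measureReal_nonneg
    have k3 : 0 ≤ P1.real A.1 := measureReal_nonneg
    simp only [Measure.real] at k0 k1 k2 k3
    simp only [abs_le]
    constructor <;> linarith
  refine ciSup_le fun A => ?_
  have e : (mix lam P0 P1 A.1).toReal = lam * (P0 A.1).toReal + (1 - lam) * (P1 A.1).toReal := by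
    simp only [mix, Measure.add_apply, Measure.smul_apply, smul_eq_mul]
    rw [ENNReal.toReal_add (ENNReal.mul_ne_top (by simp) (measure_ne_top _ _))
      (ENNReal.mul_ne_top (by simp) (measure_ne_top _ _))]
    simp [ENNReal.toReal_mul, h0, h1]
  rw [e, show lam * (P0 A.1).toReal + (1 - lam) * (P1 A.1).toReal - (P1 A.1).toReal
    = lam * ((P0 A.1).toReal - (P1 A.1).toReal) by ring, abs_mul, abs_of_nonneg h0]
  exact mul_le_mul_of_nonneg_left (le_ciSup hbd A) h0

theorem omega_ge {X : Type*} [MeasurableSpace X] (P : Set (Measure X)) (θ : Measure X → ℝ)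
    (hA : CondA P θ) (ε : ℝ) (P0 : Measure X) (h0 : P0 ∈ P) (P1 : Measure X) (h1 : P1 ∈ P)
    (hd : dTV P0 P1 ≤ ε) : |θ P0 - θ P1| ≤ (omegaTV P θ ε).toReal := by
  obtain ⟨c, hc⟩ := hA
  have hfin : omegaTV P θ ε ≤ ENNReal.ofReal (2 * c) := by
    unfold omegaTV modulus
    refine iSup_le fun Q0 => iSup_le fun k0 => iSup_le fun Q1 => iSup_le fun k1 => iSup_le fun _ => ?_
    apply ENNReal.ofReal_le_ofReal
    have j0 := abs_le.1 (hc Q0 k0)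
    have j1 := abs_le.1 (hc Q1 k1)
    rw [abs_le]
    constructor <;> linarith
  have hle : ENNReal.ofReal |θ P0 - θ P1| ≤ omegaTV P θ ε := by
    unfold omegaTV modulus
    exact le_iSup_of_le P0 (le_iSup_of_le h0 (le_iSup_of_le P1 (le_iSup_of_le h1
      (le_iSup_of_le hd le_rfl))))
  have := ENNReal.toReal_mono (ne_top_of_le_ne_top ENNReal.ofReal_ne_top hfin) hle
  rwa [ENNReal.toReal_ofReal (abs_nonneg _)] at this

theorem omega_lin {X : Type*} [MeasurableSpace X] (P : Set (Measure X))
    (hP : ∀ μ ∈ P, IsProbabilityMeasure μ) (θ : Measure X → ℝ)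
    (hA : CondA P θ) (hconv : ConvexMeasureSet P) (hlin : LinearFunctional P θ)
    (ε : ℝ) (hε : 0 < ε) (P0 : Measure X) (h0 : P0 ∈ P) (P1 : Measure X) (h1 : P1 ∈ P) :
    θ P0 - θ P1 ≤ (omegaTV P θ ε).toReal + (omegaTV P θ ε).toReal / ε * dTV P0 P1 := by
  set W := (omegaTV P θ ε).toReal with hW
  have hW0 : 0 ≤ W := ENNReal.toReal_nonneg
  have := hP P0 h0
  have := hP P1 h1
  have hd0 : 0 ≤ dTV P0 P1 := Real.iSup_nonneg fun _ => abs_nonneg _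
  by_cases hd : dTV P0 P1 ≤ ε
  · have := (le_abs_self _).trans (omega_ge P θ hA ε P0 h0 P1 h1 hd)
    have h2 : 0 ≤ W / ε * dTV P0 P1 := by positivity
    linarith
  · push Not at hd
    have hdpos : 0 < dTV P0 P1 := hε.trans hd
    have hl0 : 0 ≤ ε / dTV P0 P1 := by positivity
    have hl1 : ε / dTV P0 P1 ≤ 1 := by rw [div_le_one hdpos]; exact hd.le
    have hm := dTV_mix P0 P1 _ hl0 hl1
    rw [div_mul_cancel₀ _ hdpos.ne'] at hm
    have h2 := (le_abs_self _).trans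
      (omega_ge P θ hA ε _ (hconv P0 h0 P1 h1 _ hl0 hl1) P1 h1 hm)
    rw [hlin P0 h0 P1 h1 _ hl0 hl1, ← hW] at h2
    have h3 : ε / dTV P0 P1 * (θ P0 - θ P1) ≤ W := by linarith
    have h4 : θ P0 - θ P1 ≤ W / ε * dTV P0 P1 := by
      rw [div_mul_eq_mul_div, div_le_iff₀ hdpos] at h3
      rw [div_mul_eq_mul_div, le_div_iff₀ hε]
      linarith
    linarith

theorem exp_bound_aux (a : ℝ) (ha : 1 < a) : ∃ M : ℕ,
    2 * Real.log (2 * a) + 1 ≤ (3 / 2 : ℝ) ^ M ∧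
    a ^ (⌈2 * Real.log (Real.sqrt (2 * Real.log (2 * a)) + 1) / Real.log (3 / 2)⌉ + 1)
      = a ^ (M + 1) := by
  have hL0 : 0 ≤ Real.log (2 * a) := Real.log_nonneg (by linarith)
  set C := Real.sqrt (2 * Real.log (2 * a)) + 1 with hC
  have hC1 : 1 ≤ C := by
    have := Real.sqrt_nonneg (2 * Real.log (2 * a))
    linarith
  have hl : 0 < Real.log (3 / 2) := Real.log_pos (by norm_num)
  have hx : 0 ≤ 2 * Real.log C / Real.log (3 / 2) :=
    div_nonneg (mul_nonneg (by norm_num) (Real.log_nonneg hC1)) hl.le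
  obtain ⟨M, hM⟩ := Int.eq_ofNat_of_zero_le (Int.ceil_nonneg hx)
  refine ⟨M, ?_, ?_⟩
  · have h1 : 2 * Real.log C / Real.log (3 / 2) ≤ M := by
      have := Int.le_ceil (2 * Real.log C / Real.log (3 / 2))
      rw [hM] at this
      exact_mod_cast this
    rw [div_le_iff₀ hl] at h1
    have h2 : C ^ 2 ≤ (3 / 2 : ℝ) ^ M := by
      rw [← Real.log_le_log_iff (by positivity) (by positivity), Real.log_pow, Real.log_pow]
      exact_mod_cast h1
    have h3 : 2 * Real.log (2 * a) + 1 ≤ C ^ 2 := by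
      have h4 := Real.sq_sqrt (show 0 ≤ 2 * Real.log (2 * a) by positivity)
      have := Real.sqrt_nonneg (2 * Real.log (2 * a))
      rw [hC]
      nlinarith
    linarith
  · rw [hM]
    exact_mod_cast rfl

theorem main_aux {X : Type*} [MeasurableSpace X] (α : ℝ) (hα : 0 < α) (n : ℕ) (hn : 0 < n)
    (P : Set (Measure X)) (hP : ∀ μ ∈ P, IsProbabilityMeasure μ) (θ : Measure X → ℝ)
    (hA : CondA P θ) (l : ℝ → ℝ) (a : ℝ) (ha : 1 < a) (hB : CondB l a)
    (hconv : ConvexMeasureSet P) (hdom : Dominated P) (hlin : LinearFunctional P θ)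
    (M : ℕ) (hM : 2 * Real.log (2 * a) + 1 ≤ (3 / 2 : ℝ) ^ M) (W : ℝ)
    (hW : W = (omegaTV P θ (4 / Real.sqrt n * ((Real.exp α + 1) / (Real.exp α - 1)))).toReal) :
    privMinimaxRisk n α l P θ ≤ ENNReal.ofReal (9 * (a ^ (M + 1) * l W)) := by
  have he : 1 < Real.exp α := Real.one_lt_exp_iff.2 hα
  have hn' : (0 : ℝ) < n := by exact_mod_cast hn
  have hsn : 0 < Real.sqrt n := Real.sqrt_pos.2 hn'
  have hsq : Real.sqrt n * Real.sqrt n = n := Real.mul_self_sqrt hn'.le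
  set K := (Real.exp α + 1) / (Real.exp α - 1) with hK
  have hKpos : 0 < K := div_pos (by linarith) (by linarith)
  have hKinv : (Real.exp α - 1) / (Real.exp α + 1) = 1 / K := by
    rw [hK, one_div_div]
  set ε := 4 / Real.sqrt n * K with hε
  have hεpos : 0 < ε := by positivity
  have hW0 : 0 ≤ W := by rw [hW]; exact ENNReal.toReal_nonneg
  have hmod : ∀ P0 ∈ P, ∀ P1 ∈ P, θ P0 - θ P1 ≤ W + W / ε * dTV P0 P1 := by
    intro P0 h0 P1 h1
    rw [hW]
    exact omega_lin P hP θ hA hconv hlin ε hεpos P0 h0 P1 h1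
  have hKinv0 : 0 ≤ 1 / K := by positivity
  rcases P.eq_empty_or_nonempty with hemp | hne
  · refine priv_le α hα n P hP θ l (fun _ => 0) measurable_const (fun _ => by simpa [hKinv] using hKpos.le)
      (fun _ => 0) measurable_const _ ?_
    intro μ hμ
    rw [hemp] at hμ
    exact absurd hμ (Set.notMem_empty μ)
  rcases hW0.eq_or_lt with hW00 | hWpos
  · obtain ⟨μ₀, hμ₀⟩ := hne
    refine priv_le α hα n P hP θ l (fun _ => 0) measurable_const (fun _ => by simpa [hKinv] using hKpos.le)
      (fun _ => θ μ₀) measurable_const _ ?_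
    intro μ hμ
    have h1 := hmod μ hμ μ₀ hμ₀
    have h2 := hmod μ₀ hμ₀ μ hμ
    rw [← hW00] at h1 h2
    have h3 : θ μ₀ - θ μ = 0 := by
      simp only [zero_div, zero_mul, add_zero] at h1 h2
      linarith
    simp [h3, hB.2.2.1]
  obtain ⟨h, b, hm, hb, hbias⟩ := bias_lemma P hP hne θ hA hconv hdom hlin W (W / ε)
    (by positivity) hmod
  set z0 := W / ε * K with hz0
  have hz0pos : 0 < z0 := by positivity
  set t := 1 / (4 * Real.sqrt n) with ht
  have htpos : 0 < t := by positivity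
  have hz0t : z0 / n = W * t := by
    have h1 : ∀ s : ℝ, 0 < s → W / (4 / s * K) * K / (s * s) = W * (1 / (4 * s)) := by
      intro s hs
      field_simp
    have h2 := h1 _ hsn
    rw [hsq] at h2
    exact h2
  have hs1 : 1 ≤ Real.sqrt n := by
    rw [Real.one_le_sqrt]; exact_mod_cast hn
  have ht2 : |t| ≤ 1 / 2 := by
    rw [abs_of_pos htpos, ht]
    rw [div_le_div_iff₀ (by positivity) (by norm_num)]
    linarith
  have htn : n * (4 * t ^ 2) ≤ 1 := by
    have : n * (4 * t ^ 2) = 1 / 4 := by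
      have h1 : ∀ s : ℝ, 0 < s → (s * s) * (4 * (1 / (4 * s)) ^ 2) = 1 / 4 := by
        intro s hs
        field_simp
      have h2 := h1 _ hsn
      rw [hsq] at h2
      exact h2
    rw [this]; norm_num
  have hl0 : 0 ≤ l W := hB.2.1 W hW0
  have hhb : ∀ x, |h x / z0| ≤ 1 / K := by
    intro x
    rw [abs_div, abs_of_pos hz0pos, div_le_div_iff₀ hz0pos hKpos, one_mul, hz0]
    exact mul_le_mul_of_nonneg_right (hb x) hKpos.le
  refine priv_le α hα n P hP θ l (fun x => h x / z0) (hm.div_const _) (by rwa [hKinv])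
    (fun z => b + z0 / n * ∑ i, z i 0) (by fun_prop) _ ?_
  intro μ hμ
  have := hP μ hμ
  have hmean : ∫ x, h x / z0 ∂μ = (∫ x, h x ∂μ) / z0 := integral_div _ _
  set p := ∫ x, h x / z0 ∂μ with hp
  have hK1 : 1 / K ≤ 1 := by
    rw [← hKinv, div_le_one (by positivity)]; linarith
  have hp1 : |p| ≤ 1 := by
    have := norm_integral_le_of_norm_le_const (μ := μ) (f := fun x => h x / z0) (C := 1)
      (Filter.Eventually.of_forall fun x => (hhb x).trans hK1)
    simpa using this
  have := bm_prob p hp1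
  set B := a ^ (M + 1) * l W with hBdef
  have hB0 : 0 ≤ B := by positivity
  have hpt : ∀ z : Fin n → Fin 1 → ℝ,
      ENNReal.ofReal (l |b + z0 / n * ∑ i, z i 0 - θ μ|) ≤
        ENNReal.ofReal B * (1 + (ENNReal.ofReal (Real.exp (t * ∑ i : Fin n, (z i 0 - p)))
          + ENNReal.ofReal (Real.exp (-t * ∑ i : Fin n, (z i 0 - p))))) := by
    intro z
    set s := ∑ i : Fin n, (z i 0 - p) with hs
    have hsum : ∑ i, z i 0 = s + n * p := by
      rw [hs, Finset.sum_sub_distrib]; simp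
    have e1 : b + z0 / n * ∑ i, z i 0 - θ μ = ((∫ x, h x ∂μ) + b - θ μ) + W * (t * s) := by
      have e2 : z0 / n * (n * p) = ∫ x, h x ∂μ := by
        rw [hmean]
        field_simp
      rw [hsum, mul_add, e2, hz0t]
      ring
    have hy : |b + z0 / n * ∑ i, z i 0 - θ μ| ≤ (1 / 2 + |t * s|) * W := by
      rw [e1]
      refine (abs_add_le _ _).trans ?_
      rw [abs_mul W, abs_of_pos hWpos]
      have := hbias μ hμ
      linarith
    have h1 := loss_bound l a ha hB W hWpos M hM |t * s| _ (abs_nonneg _) (abs_nonneg _) hy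
    have h2 : Real.exp |t * s| ≤ Real.exp (t * s) + Real.exp (-t * s) := by
      rw [neg_mul]
      rcases abs_cases (t * s) with ⟨h, _⟩ | ⟨h, _⟩ <;> rw [h]
      · linarith [Real.exp_pos (-(t * s))]
      · linarith [Real.exp_pos (t * s)]
    rw [← ENNReal.ofReal_add (Real.exp_nonneg _) (Real.exp_nonneg _), ← ENNReal.ofReal_one,
      ← ENNReal.ofReal_add zero_le_one (by positivity), ← ENNReal.ofReal_mul hB0]
    apply ENNReal.ofReal_le_ofReal
    refine h1.trans ?_
    exact mul_le_mul_of_nonneg_left (by linarith) hB0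
  refine (lintegral_mono hpt).trans ?_
  rw [lintegral_const_mul _ (by fun_prop), lintegral_add_left (by fun_prop),
    lintegral_add_left (by fun_prop)]
  have m1 := mgf_n n p t hp1 ht2 htn
  have m2 := mgf_n n p (-t) hp1 (by rwa [abs_neg]) (by rwa [neg_sq])
  simp only [lintegral_const, measure_univ, mul_one]
  calc _ ≤ ENNReal.ofReal B * (1 + (ENNReal.ofReal (Real.exp 1) + ENNReal.ofReal (Real.exp 1))) := by
        gcongr
    _ = ENNReal.ofReal (B * (1 + (Real.exp 1 + Real.exp 1))) := by
        rw [← ENNReal.ofReal_add (Real.exp_nonneg _) (Real.exp_nonneg _), ← ENNReal.ofReal_one,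
          ← ENNReal.ofReal_add zero_le_one (by positivity), ← ENNReal.ofReal_mul hB0]
    _ ≤ _ := by
        apply ENNReal.ofReal_le_ofReal
        have := Real.exp_one_lt_d9
        nlinarith

/-- Corollary: attainability of the `α`-private minimax rate.
Under Conditions A and B, with `𝒫` convex and dominated and `θ` linear, the `α`-private
minimax risk satisfies
`M_{n,α}(𝒫, θ) ≤ C1 · l(ω_TV((4/√n)(e^α+1)/(e^α-1)))`, where
`C1 = (1 + 8a²/(2a-1)) a^{⌈2 log C / log(3/2)⌉ + 1}` and `C = √(2 log 2a) + 1`. -/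
theorem statement8 {X : Type*} [MeasurableSpace X] (α : ℝ) (hα : 0 < α) (n : ℕ) (hn : 0 < n)
    (P : Set (Measure X)) (hP : ∀ μ ∈ P, IsProbabilityMeasure μ) (θ : Measure X → ℝ)
    (hA : CondA P θ) (l : ℝ → ℝ) (a : ℝ) (ha : 1 < a) (hB : CondB l a)
    (hconv : ConvexMeasureSet P) (hdom : Dominated P) (hlin : LinearFunctional P θ) :
    privMinimaxRisk n α l P θ ≤
      ENNReal.ofReal
        (((1 + 8 * a ^ 2 / (2 * a - 1)) *
            a ^ (⌈2 * Real.log (Real.sqrt (2 * Real.log (2 * a)) + 1) /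
              Real.log (3 / 2)⌉ + 1)) *
          l ((omegaTV P θ
              (4 / Real.sqrt n * ((Real.exp α + 1) / (Real.exp α - 1)))).toReal)) := by
  obtain ⟨M, hM, hpow⟩ := exp_bound_aux a ha
  rw [hpow]
  refine (main_aux α hα n hn P hP θ hA l a ha hB hconv hdom hlin M hM _ rfl).trans ?_
  apply ENNReal.ofReal_le_ofReal
  rw [mul_assoc]
  have hl0 := hB.2.1 ((omegaTV P θ
              (4 / Real.sqrt n * ((Real.exp α + 1) / (Real.exp α - 1)))).toReal)
              ENNReal.toReal_nonneg
  refine mul_le_mul_of_nonneg_right ?_ (by positivity)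
  have h1 : 8 ≤ 8 * a ^ 2 / (2 * a - 1) := by
    rw [le_div_iff₀ (by linarith)]
    nlinarith [sq_nonneg (a - 1)]
  linarith

end PrivacyPaper
end

section
/- Fix a finite constant Δ > 0 and suppose −∞ < M_− < M_+ < ∞, where M_− = inf_{P∈P} θ(P) and M_+ = sup_{P∈P} θ(P); set M = M_+ − M_−, let N be the smallest integer with NΔ > M, and set η_l = (l+1)Δ for l ∈ ℕ0. Let Q be a non-interactive channel from X^n to Z^n with identical marginals Q1 such that the family Q1P = { Q1P : P ∈ P } is dominated by a σ-finite measure. Then there exists a measurable estimator θ̂ : Z^n → ℝ such that for every l ∈ ℕ0: sup_{P∈P} Q P^⊗n( { z ∈ Z^n : |θ̂(z) − θ(P)| > η_l } ) ≤ 4·∑_{k=l+1}^{N−2} max( η_A^{(n)}(Q, kΔ), 0 ), where an empty sum is 0; moreover, θ̂ takes values in { M_− + jΔ : j = 1,…,N−1 } if N ≥ 3, and θ̂ ≡ (M_− + M_+)/2 otherwise. -/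
open MeasureTheory ProbabilityTheory ENNReal

namespace PrivacyPaper

variable {X Z Ω : Type*} [MeasurableSpace X] [MeasurableSpace Z] [MeasurableSpace Ω]

section core
open Topology

lemma pi_ac {Z : Type*} [MeasurableSpace Z] (μ ν : Measure Z) [IsFiniteMeasure μ]
    [IsFiniteMeasure ν] (h : μ ≪ ν) (n : ℕ) :
    (Measure.pi fun _ : Fin n => μ) ≪ (Measure.pi fun _ : Fin n => ν) := by
  induction n with
  | zero => rw [Measure.pi_of_empty, Measure.pi_of_empty]
  | succ n ih =>
    have e1 := (measurePreserving_piFinSuccAbove (fun _ : Fin (n+1) => μ) 0).symm.map_eq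
    have e2 := (measurePreserving_piFinSuccAbove (fun _ : Fin (n+1) => ν) 0).symm.map_eq
    rw [← e1, ← e2]
    exact (h.prod ih).map (MeasurableEquiv.measurable _)


/-- functional associated to a test -/
lemma exists_functional (ν : Measure Ω) (φ : Ω → ℝ) (hφ : IsTest φ) :
    ∃ M : StrongDual ℝ (Lp ℝ 1 ν), (∀ f, M f = ∫ ω, φ ω * f ω ∂ν) ∧ ‖M‖ ≤ 1 ∧
      ∀ f : Lp ℝ 1 ν, 0 ≤ f → 0 ≤ M f := by
  have hm : MemLp φ ∞ ν := memLp_top_of_bound hφ.1.aestronglyMeasurable 1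
    (Filter.Eventually.of_forall fun ω => by
      rw [Real.norm_eq_abs, abs_le]; constructor <;> linarith [(hφ.2 ω).1, (hφ.2 ω).2])
  have key : ∀ f : Lp ℝ 1 ν, (ContinuousLinearMap.mul ℝ ℝ).lpPairing ν ∞ 1 hm.toLp f
      = ∫ ω, φ ω * f ω ∂ν := by
    intro f
    rw [ContinuousLinearMap.lpPairing_eq_integral]
    refine integral_congr_ae ?_
    filter_upwards [hm.coeFn_toLp] with ω h
    simp [h]
  refine ⟨(ContinuousLinearMap.mul ℝ ℝ).lpPairing ν ∞ 1 hm.toLp, key, ?_, ?_⟩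
  · refine ContinuousLinearMap.opNorm_le_bound _ zero_le_one fun f => ?_
    rw [key, one_mul, L1.norm_eq_integral_norm]
    refine norm_integral_le_of_norm_le (L1.integrable_coeFn f).norm
      (Filter.Eventually.of_forall fun ω => ?_)
    rw [norm_mul, Real.norm_eq_abs, abs_of_nonneg (hφ.2 ω).1]
    exact mul_le_of_le_one_left (norm_nonneg _) (hφ.2 ω).2
  · intro f hf
    rw [key]
    refine integral_nonneg_of_ae ?_
    filter_upwards [(Lp.coeFn_nonneg f).2 hf] with ω h
    exact mul_nonneg (hφ.2 ω).1 h

/-- representation of a positive contraction by a test -/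
lemma exists_test (ν : Measure Ω) [IsFiniteMeasure ν] (Λ : StrongDual ℝ (Lp ℝ 1 ν)) (h1 : ‖Λ‖ ≤ 1)
    (h0 : ∀ f : Lp ℝ 1 ν, 0 ≤ f → 0 ≤ Λ f) :
    ∃ φ : Ω → ℝ, IsTest φ ∧ ∀ f : Lp ℝ 1 ν, Λ f = ∫ ω, φ ω * f ω ∂ν := by
  let one : Lp ℝ 2 ν := indicatorConstLp 2 MeasurableSet.univ (measure_ne_top ν _) 1
  let T : Lp ℝ 2 ν →L[ℝ] Lp ℝ 1 ν := (ContinuousLinearMap.mul ℝ ℝ).holderL ν 2 2 1 one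
  let h : Lp ℝ 2 ν := (InnerProductSpace.toDual ℝ (Lp ℝ 2 ν)).symm (Λ.comp T)
  have hint : ∀ A : Set Ω, ∀ hA : MeasurableSet A,
      ∫ ω in A, h ω ∂ν = Λ (indicatorConstLp 1 hA (measure_ne_top ν _) 1) := by
    intro A hA
    have e1 : inner ℝ h (indicatorConstLp 2 hA (measure_ne_top ν _) (1:ℝ))
        = Λ (T (indicatorConstLp 2 hA (measure_ne_top ν _) (1:ℝ))) := by
      simp only [h, InnerProductSpace.toDual_symm_apply]; rfl
    have e2 : T (indicatorConstLp 2 hA (measure_ne_top ν _) (1:ℝ))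
        = indicatorConstLp 1 hA (measure_ne_top ν _) 1 := by
      apply Lp.ext
      have := (ContinuousLinearMap.mul ℝ ℝ).coeFn_holder (r := 1) one
        (indicatorConstLp 2 hA (measure_ne_top ν _) (1:ℝ))
      filter_upwards [this, indicatorConstLp_coeFn (p := 1) (hs := hA)
        (hμs := measure_ne_top ν A) (c := (1:ℝ)), indicatorConstLp_coeFn (p := 2) (hs := hA)
        (hμs := measure_ne_top ν A) (c := (1:ℝ)), indicatorConstLp_coeFn (p := 2) (hs := MeasurableSet.univ)
        (hμs := measure_ne_top ν Set.univ) (c := (1:ℝ))] with ω w1 w2 w3 w4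
      have : (T (indicatorConstLp 2 hA (measure_ne_top ν _) (1:ℝ))) ω = _ := w1
      rw [this, w2, w3]
      simp only [one, w4]
      simp
    rw [← e2, ← e1, real_inner_comm, L2.inner_indicatorConstLp_one]
  have hI : Integrable h ν := (Lp.memLp h).integrable (by norm_num)
  have hnn : 0 ≤ᵐ[ν] h := by
    refine ae_nonneg_of_forall_setIntegral_nonneg hI fun A hA _ => ?_
    rw [hint A hA]
    apply h0
    rw [← Lp.coeFn_nonneg]
    filter_upwards [indicatorConstLp_coeFn (p := 1) (hs := hA)
        (hμs := measure_ne_top ν A) (c := (1:ℝ))] with ω w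
    rw [w]
    exact Set.indicator_nonneg (fun _ _ => zero_le_one) _
  have hle : h ≤ᵐ[ν] fun _ => (1:ℝ) := by
    refine ae_le_of_forall_setIntegral_le hI (integrable_const _) fun A hA _ => ?_
    rw [hint A hA]
    refine (le_abs_self _).trans ((Λ.le_opNorm _).trans ?_)
    refine (mul_le_of_le_one_left (norm_nonneg _) h1).trans ?_
    rw [norm_indicatorConstLp (by simp) (by simp)]
    simp
  let φ : Ω → ℝ := fun ω => max 0 (min 1 (h ω))
  have hφ : IsTest φ := by
    refine ⟨?_, fun ω => ⟨le_max_left _ _, max_le zero_le_one (min_le_left _ _)⟩⟩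
    exact measurable_const.max (measurable_const.min (Lp.stronglyMeasurable h).measurable)
  have hφh : φ =ᵐ[ν] h := by
    filter_upwards [hnn, hle] with ω w1 w2
    simp only [φ]
    rw [min_eq_right w2]; exact max_eq_right w1
  refine ⟨φ, hφ, ?_⟩
  obtain ⟨M, hM, -, -⟩ := exists_functional ν φ hφ
  intro f
  rw [← hM]
  refine Lp.induction (p := 1) ENNReal.one_ne_top (fun f : Lp ℝ 1 ν => Λ f = M f) ?_ ?_ ?_ f
  · intro c s hs hμs
    have e : (Lp.simpleFunc.indicatorConst 1 hs hμs.ne c : Lp ℝ 1 ν)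
        = c • indicatorConstLp 1 hs (measure_ne_top ν _) (1:ℝ) := by
      rw [Lp.simpleFunc.coe_indicatorConst]
      apply Lp.ext
      filter_upwards [Lp.coeFn_smul c (indicatorConstLp 1 hs (measure_ne_top ν _) (1:ℝ)),
        indicatorConstLp_coeFn (p := 1) (hs := hs) (hμs := measure_ne_top ν s) (c := (1:ℝ)),
        indicatorConstLp_coeFn (p := 1) (hs := hs) (hμs := hμs.ne) (c := c)] with ω w1 w2 w3
      rw [w1, w3, Pi.smul_apply, w2]
      by_cases hw : ω ∈ s <;> simp [hw]
    rw [e, map_smul, map_smul, ← hint s hs, hM]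
    congr 1
    rw [← integral_indicator hs]
    refine integral_congr_ae ?_
    filter_upwards [hφh, indicatorConstLp_coeFn (p := 1) (hs := hs)
        (hμs := measure_ne_top ν s) (c := (1:ℝ))] with ω w1 w2
    rw [w1, w2]
    by_cases hw : ω ∈ s <;> simp [hw]
  · intro f g hf hg _ e1 e2
    rw [map_add, map_add, e1, e2]
  · exact isClosed_eq Λ.continuous M.continuous

end core

section core2
open scoped Pointwise
open Topology

lemma test_bound {φ : Ω → ℝ} (hφ : IsTest φ) (ω : Ω) : ‖φ ω‖ ≤ 1 := by
  rw [Real.norm_eq_abs, abs_le]; constructor <;> linarith [(hφ.2 ω).1, (hφ.2 ω).2]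

lemma test_integrable {φ : Ω → ℝ} (hφ : IsTest φ) (μ : Measure Ω) [IsFiniteMeasure μ] :
    Integrable φ μ :=
  Integrable.of_bound hφ.1.aestronglyMeasurable 1 (Filter.Eventually.of_forall (test_bound hφ))

lemma testRisk_eq {φ : Ω → ℝ} (hφ : IsTest φ) (μ0 μ1 : Measure Ω) [IsProbabilityMeasure μ1] :
    testRisk μ0 μ1 φ = 1 + ((∫ ω, φ ω ∂μ0) - ∫ ω, φ ω ∂μ1) := by
  unfold testRisk
  rw [integral_sub (integrable_const _) (test_integrable hφ μ1)]
  simp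
  ring

/-- densities -/
def DSet (ν : Measure Ω) (A : Set (Measure Ω)) : Set (Lp ℝ 1 ν) :=
  {f | ∃ μ ∈ A, ∀ φ : Ω → ℝ, IsTest φ → ∫ ω, φ ω ∂μ = ∫ ω, φ ω * f ω ∂ν}

lemma exists_density (ν : Measure Ω) [IsFiniteMeasure ν] (μ : Measure Ω) [IsFiniteMeasure μ]
    (h : μ ≪ ν) :
    ∃ f : Lp ℝ 1 ν, ∀ φ : Ω → ℝ, IsTest φ → ∫ ω, φ ω ∂μ = ∫ ω, φ ω * f ω ∂ν := by
  have hi : Integrable (fun ω => (μ.rnDeriv ν ω).toReal) ν := Measure.integrable_toReal_rnDeriv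
  refine ⟨hi.toL1, fun φ _ => ?_⟩
  rw [← integral_rnDeriv_smul h]
  refine integral_congr_ae ?_
  filter_upwards [hi.coeFn_toL1] with ω w
  rw [w, smul_eq_mul, mul_comm]

lemma convComb_prob {A : Set (Measure Ω)} (hA : ∀ μ ∈ A, IsProbabilityMeasure μ)
    {μ : Measure Ω} (hμ : μ ∈ convComb A) : IsProbabilityMeasure μ := by
  obtain ⟨m, w, ν, hw, hν, rfl⟩ := hμ
  constructor
  rw [Measure.finsetSum_apply]
  rw [← hw]
  refine Finset.sum_congr rfl fun i _ => ?_
  have := hA _ (hν i)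
  simp

lemma hull_convComb (ν : Measure Ω) (A : Set (Measure Ω))
    (hA : ∀ μ ∈ A, IsProbabilityMeasure μ) (f : Lp ℝ 1 ν) (hf : f ∈ convexHull ℝ (DSet ν A)) :
    ∃ μ ∈ convComb A, ∀ φ : Ω → ℝ, IsTest φ → ∫ ω, φ ω ∂μ = ∫ ω, φ ω * f ω ∂ν := by
  rw [mem_convexHull_iff_exists_fintype] at hf
  obtain ⟨ι, _, w, z, hw0, hw1, hz, rfl⟩ := hf
  choose μ hμ hφ using hz
  let e := (Fintype.equivFin ι).symm
  refine ⟨∑ i, ENNReal.ofReal (w i) • μ i, ⟨Fintype.card ι, fun i => ENNReal.ofReal (w (e i)),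
    fun i => μ (e i), ?_, fun i => hμ _, ?_⟩, ?_⟩
  · rw [Equiv.sum_comp e (fun i => ENNReal.ofReal (w i)),
      ← ENNReal.ofReal_sum_of_nonneg (fun i _ => hw0 i), hw1, ENNReal.ofReal_one]
  · rw [Equiv.sum_comp e (fun i => ENNReal.ofReal (w i) • μ i)]
  · intro φ h
    obtain ⟨M, hM, -, -⟩ := exists_functional ν φ h
    rw [← hM, map_sum, integral_finsetSum_measure]
    · refine Finset.sum_congr rfl fun i _ => ?_
      rw [integral_smul_measure, map_smul, hM, hφ i φ h, ENNReal.toReal_ofReal (hw0 i)]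
    · intro i _
      have := hA _ (hμ i)
      exact (test_integrable h (μ i)).smul_measure ENNReal.ofReal_ne_top

lemma minimax_test (ν : Measure Ω) [IsFiniteMeasure ν] (A0 A1 : Set (Measure Ω))
    (h0 : ∀ μ ∈ A0, IsProbabilityMeasure μ) (h1 : ∀ μ ∈ A1, IsProbabilityMeasure μ)
    (a0 : ∀ μ ∈ A0, μ ≪ ν) (a1 : ∀ μ ∈ A1, μ ≪ ν) (η : ℝ)
    (hη : ∀ μ0 ∈ convComb A0, ∀ μ1 ∈ convComb A1, pairAffinity μ0 μ1 ≤ η) :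
    ∃ φ : Ω → ℝ, IsTest φ ∧ ∀ μ0 ∈ A0, ∀ μ1 ∈ A1, testRisk μ0 μ1 φ ≤ η := by
  let K : Set (WeakDual ℝ (Lp ℝ 1 ν)) :=
    (WeakDual.toStrongDual ⁻¹' Metric.closedBall 0 1) ∩ {Λ | ∀ f : Lp ℝ 1 ν, 0 ≤ f → 0 ≤ Λ f}
  have evc : ∀ f : Lp ℝ 1 ν, Continuous fun Λ : WeakDual ℝ (Lp ℝ 1 ν) => Λ f :=
    fun f => WeakDual.eval_continuous f
  have kK : IsCompact K := by
    refine (WeakDual.isCompact_closedBall 0 1).inter_right ?_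
    have : {Λ : WeakDual ℝ (Lp ℝ 1 ν) | ∀ f : Lp ℝ 1 ν, 0 ≤ f → 0 ≤ Λ f}
      = ⋂ (f : Lp ℝ 1 ν) (_ : 0 ≤ f), {Λ | 0 ≤ Λ f} := by ext; simp
    rw [this]
    exact isClosed_iInter fun f => isClosed_iInter fun _ => isClosed_le continuous_const (evc f)
  have cK : Convex ℝ K := by
    intro Λ hΛ Λ' hΛ' a b ha hb hab
    refine ⟨?_, ?_⟩
    · exact convex_closedBall (0 : StrongDual ℝ (Lp ℝ 1 ν)) 1 hΛ.1 hΛ'.1 ha hb hab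
    · intro f hf
      have e : (a • Λ + b • Λ') f = a * Λ f + b * Λ' f := rfl
      rw [e]
      exact add_nonneg (mul_nonneg ha (hΛ.2 f hf)) (mul_nonneg hb (hΛ'.2 f hf))
  have neK : K.Nonempty := by
    refine ⟨0, ?_, fun f _ => le_refl _⟩
    simp
  let Y : Set (Lp ℝ 1 ν) := convexHull ℝ (DSet ν A0) - convexHull ℝ (DSet ν A1)
  have cY : Convex ℝ Y := (convex_convexHull ℝ _).sub (convex_convexHull ℝ _)
  -- no y separates
  have hY : ∀ y ∈ Y, ∃ Λ ∈ K, Λ y ≤ η - 1 := by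
    rintro y ⟨f0, hf0, f1, hf1, rfl⟩
    obtain ⟨μ0, m0, e0⟩ := hull_convComb ν A0 h0 f0 hf0
    obtain ⟨μ1, m1, e1⟩ := hull_convComb ν A1 h1 f1 hf1
    obtain ⟨Λ, hΛ, hmin⟩ := kK.exists_isMinOn neK (evc (f0 - f1)).continuousOn
    refine ⟨Λ, hΛ, ?_⟩
    have := hη μ0 m0 μ1 m1
    have p1 := convComb_prob h1 m1
    have : Λ (f0 - f1) + 1 ≤ pairAffinity μ0 μ1 := by
      refine le_csInf ⟨_, fun _ => 0, ⟨measurable_const, fun _ => by simp⟩, rfl⟩ ?_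
      rintro r ⟨φ, hφ, rfl⟩
      rw [testRisk_eq hφ, e0 φ hφ, e1 φ hφ]
      obtain ⟨M, hM, hM1, hM0⟩ := exists_functional ν φ hφ
      rw [← hM, ← hM, ← map_sub]
      have hMK : (StrongDual.toWeakDual M) ∈ K := by
        refine ⟨?_, hM0⟩
        simpa using hM1
      have := hmin hMK
      have h3 : Λ (f0 - f1) ≤ M (f0 - f1) := this
      linarith
    show Λ (f0 - f1) ≤ _
    linarith
  have main : (K ∩ ⋂ y : Y, {Λ : WeakDual ℝ (Lp ℝ 1 ν) | Λ y ≤ η - 1}).Nonempty := by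
    refine kK.inter_iInter_nonempty _ (fun y => isClosed_le (evc _) continuous_const) ?_
    intro s
    by_contra hcon
    rw [Set.not_nonempty_iff_eq_empty] at hcon
    have hex : ∀ Λ ∈ K, ∃ y ∈ (Subtype.val '' (s : Set Y)), η - 1 < Λ y := by
      intro Λ hΛ
      by_contra! hc
      have : Λ ∈ (∅ : Set (WeakDual ℝ (Lp ℝ 1 ν))) := by
        rw [← hcon]
        refine ⟨hΛ, ?_⟩
        simp only [Set.mem_iInter]
        intro y hy
        exact hc y ⟨y, hy, rfl⟩
      exact this
    obtain ⟨y0, hy0, hlt⟩ := Sion.exists_lt_iInf_of_lt_iInf_of_finite (X := K) (Y := Y)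
      (f := fun (Λ : WeakDual ℝ (Lp ℝ 1 ν)) (y : Lp ℝ 1 ν) => Λ y) neK kK
      (fun y _ => (evc y).continuousOn.lowerSemicontinuousOn)
      (fun y _ => by
        refine ConvexOn.quasiconvexOn ⟨cK, ?_⟩
        intro Λ _ Λ' _ a b _ _ _
        exact le_of_eq rfl)
      cY
      (fun Λ _ => (ContinuousLinearMap.continuous (WeakDual.toStrongDual Λ)).continuousOn.upperSemicontinuousOn)
      (fun Λ _ => by
        refine ConcaveOn.quasiconcaveOn ⟨cY, ?_⟩
        intro y _ y' _ a b _ _ _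
        simp)
      cK (s.finite_toSet.image _) (Subtype.coe_image_subset Y ↑s) hex
    obtain ⟨Λ, hΛ, hle⟩ := hY y0 hy0
    exact absurd (hlt Λ hΛ) (not_lt.2 hle)
  obtain ⟨Λ, hΛ, hΛY⟩ := main
  obtain ⟨φ, hφ, hrep⟩ := exists_test ν (WeakDual.toStrongDual Λ) (by simpa using hΛ.1) hΛ.2
  refine ⟨φ, hφ, fun μ0 m0 μ1 m1 => ?_⟩
  have p0 := h0 _ m0
  have p1 := h1 _ m1
  obtain ⟨f0, e0⟩ := exists_density ν μ0 (a0 _ m0)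
  obtain ⟨f1, e1⟩ := exists_density ν μ1 (a1 _ m1)
  rw [testRisk_eq hφ, e0 φ hφ, e1 φ hφ, ← hrep, ← hrep, ← map_sub]
  have hy : f0 - f1 ∈ Y := Set.sub_mem_sub (subset_convexHull _ _ ⟨μ0, m0, e0⟩)
    (subset_convexHull _ _ ⟨μ1, m1, e1⟩)
  have := Set.mem_iInter.1 hΛY ⟨_, hy⟩
  have h3 : (WeakDual.toStrongDual Λ) (f0 - f1) ≤ η - 1 := this
  linarith

end core2

section core3

lemma pairAffinity_le_one (μ0 μ1 : Measure Ω) [IsProbabilityMeasure μ1] :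
    pairAffinity μ0 μ1 ≤ 1 := by
  refine csInf_le ⟨0, ?_⟩ ⟨fun _ => 0, ⟨measurable_const, fun _ => by simp⟩, by simp [testRisk]⟩
  rintro r ⟨φ, hφ, rfl⟩
  exact add_nonneg (integral_nonneg fun ω => (hφ.2 ω).1)
    (integral_nonneg fun ω => sub_nonneg.2 (hφ.2 ω).2)

lemma pairAffinity_le_etaA {Zn : Type*} [MeasurableSpace Zn] (G : Measure X → Measure Zn)
    (P : Set (Measure X)) (θ : Measure X → ℝ) (hG : ∀ μ ∈ P, IsProbabilityMeasure (G μ))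
    (t δ : ℝ) (μ0 μ1 : Measure Zn)
    (h0 : μ0 ∈ convComb (G '' {μ | μ ∈ P ∧ θ μ ≤ t}))
    (h1 : μ1 ∈ convComb (G '' {μ | μ ∈ P ∧ t + δ ≤ θ μ})) :
    pairAffinity μ0 μ1 ≤ etaA G P θ δ := by
  have hp : ∀ s : ℝ, ∀ μ ∈ convComb (G '' {μ | μ ∈ P ∧ s + δ ≤ θ μ}),
      IsProbabilityMeasure μ := by
    intro s μ hμ
    refine convComb_prob ?_ hμ
    rintro _ ⟨μ', h, rfl⟩
    exact hG _ h.1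
  have hb : ∀ s : ℝ, ∀ r ∈ {r : ℝ | ∃ μ0 ∈ convComb (G '' {μ | μ ∈ P ∧ θ μ ≤ s}),
      ∃ μ1 ∈ convComb (G '' {μ | μ ∈ P ∧ s + δ ≤ θ μ}), r = pairAffinity μ0 μ1}, r ≤ 1 := by
    rintro s r ⟨ν0, _, ν1, m1, rfl⟩
    have := hp s ν1 m1
    exact pairAffinity_le_one ν0 ν1
  have e1 : pairAffinity μ0 μ1 ≤ setAffinity (convComb (G '' {μ | μ ∈ P ∧ θ μ ≤ t}))
    (convComb (G '' {μ | μ ∈ P ∧ t + δ ≤ θ μ})) :=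
    le_csSup ⟨1, hb t⟩ ⟨μ0, h0, μ1, h1, rfl⟩
  refine e1.trans (le_ciSup (f := fun t : ℝ => setAffinity
    (convComb (G '' {μ | μ ∈ P ∧ θ μ ≤ t}))
    (convComb (G '' {μ | μ ∈ P ∧ t + δ ≤ θ μ}))) ⟨1, ?_⟩ t)
  rintro _ ⟨s, rfl⟩
  exact Real.sSup_le (hb s) zero_le_one

lemma etaA_test {Zn : Type*} [MeasurableSpace Zn] (G : Measure X → Measure Zn)
    (P : Set (Measure X)) (θ : Measure X → ℝ) (hG : ∀ μ ∈ P, IsProbabilityMeasure (G μ))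
    (ν : Measure Zn) [IsFiniteMeasure ν] (hν : ∀ μ ∈ P, G μ ≪ ν) (t δ : ℝ) :
    ∃ φ : Zn → ℝ, IsTest φ ∧
      (∀ μ ∈ P, θ μ ≤ t → ∫ z, φ z ∂(G μ) ≤ max (etaA G P θ δ) 0) ∧
      (∀ μ ∈ P, t + δ ≤ θ μ → ∫ z, (1 - φ z) ∂(G μ) ≤ max (etaA G P θ δ) 0) := by
  by_cases hl : ∃ μ ∈ P, θ μ ≤ t
  · by_cases hu : ∃ μ ∈ P, t + δ ≤ θ μ
    · obtain ⟨φ, hφ, hr⟩ := minimax_test ν (G '' {μ | μ ∈ P ∧ θ μ ≤ t})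
        (G '' {μ | μ ∈ P ∧ t + δ ≤ θ μ})
        (by rintro _ ⟨μ, h, rfl⟩; exact hG _ h.1) (by rintro _ ⟨μ, h, rfl⟩; exact hG _ h.1)
        (by rintro _ ⟨μ, h, rfl⟩; exact hν _ h.1) (by rintro _ ⟨μ, h, rfl⟩; exact hν _ h.1)
        (etaA G P θ δ) (fun μ0 h0 μ1 h1 => pairAffinity_le_etaA G P θ hG t δ μ0 μ1 h0 h1)
      have n0 : ∀ μ : Measure Zn, 0 ≤ ∫ z, φ z ∂μ := fun μ => integral_nonneg fun ω => (hφ.2 ω).1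
      have n1 : ∀ μ : Measure Zn, 0 ≤ ∫ z, (1 - φ z) ∂μ :=
        fun μ => integral_nonneg fun ω => sub_nonneg.2 (hφ.2 ω).2
      obtain ⟨ml, hml⟩ := hl
      obtain ⟨mu, hmu⟩ := hu
      refine ⟨φ, hφ, fun μ hμ h => le_max_of_le_left ?_, fun μ hμ h => le_max_of_le_left ?_⟩
      · have := hr _ ⟨μ, ⟨hμ, h⟩, rfl⟩ _ ⟨mu, hmu, rfl⟩
        unfold testRisk at this
        linarith [n1 (G mu)]
      · have := hr _ ⟨ml, hml, rfl⟩ _ ⟨μ, ⟨hμ, h⟩, rfl⟩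
        unfold testRisk at this
        linarith [n0 (G ml)]
    · refine ⟨fun _ => 0, ⟨measurable_const, fun _ => by simp⟩, ?_, ?_⟩
      · intro μ hμ h; simp
      · intro μ hμ h; exact absurd ⟨μ, hμ, h⟩ hu
  · refine ⟨fun _ => 1, ⟨measurable_const, fun _ => by simp⟩, ?_, ?_⟩
    · intro μ hμ h; exact absurd ⟨μ, hμ, h⟩ hl
    · intro μ hμ h; simp

lemma markov_half (μ : Measure Ω) [IsProbabilityMeasure μ] (φ : Ω → ℝ) (hφ : IsTest φ) (η : ℝ)
    (h : ∫ z, φ z ∂μ ≤ η) : μ {z | 1 / 2 ≤ φ z} ≤ ENNReal.ofReal (2 * η) := by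
  have := mul_meas_ge_le_integral_of_nonneg (μ := μ)
    (Filter.Eventually.of_forall fun ω => (hφ.2 ω).1) (test_integrable hφ μ) (1/2)
  rw [← ENNReal.ofReal_toReal (measure_ne_top μ {z | 1 / 2 ≤ φ z})]
  refine ENNReal.ofReal_le_ofReal ?_
  unfold Measure.real at this
  linarith

lemma etaA_set {Zn : Type*} [MeasurableSpace Zn] (G : Measure X → Measure Zn)
    (P : Set (Measure X)) (θ : Measure X → ℝ) (hG : ∀ μ ∈ P, IsProbabilityMeasure (G μ))
    (ν : Measure Zn) [IsFiniteMeasure ν] (hν : ∀ μ ∈ P, G μ ≪ ν) (t δ : ℝ) :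
    ∃ D : Set Zn, MeasurableSet D ∧
      (∀ μ ∈ P, θ μ ≤ t → G μ D ≤ ENNReal.ofReal (2 * max (etaA G P θ δ) 0)) ∧
      (∀ μ ∈ P, t + δ ≤ θ μ → G μ Dᶜ ≤ ENNReal.ofReal (2 * max (etaA G P θ δ) 0)) := by
  obtain ⟨φ, hφ, h0, h1⟩ := etaA_test G P θ hG ν hν t δ
  refine ⟨{z | 1 / 2 ≤ φ z}, measurableSet_le measurable_const hφ.1, ?_, ?_⟩
  · intro μ hμ h
    have := hG μ hμ
    exact markov_half _ φ hφ _ (h0 μ hμ h)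
  · intro μ hμ h
    have := hG μ hμ
    refine (measure_mono ?_).trans (markov_half (G μ) (fun z => 1 - φ z)
      ⟨measurable_const.sub hφ.1, fun ω => ⟨by linarith [(hφ.2 ω).2], by linarith [(hφ.2 ω).1]⟩⟩ _
      (h1 μ hμ h))
    intro z hz
    simp only [Set.mem_compl_iff, Set.mem_ofPred_eq, not_le] at hz ⊢
    linarith

open Classical in
/-- the search: interval `[a, a+k+2)`, returns the midpoint index of the final interval -/
noncomputable def search {Zn : Type*} (D : ℕ → ℕ → Set Zn) : ℕ → ℕ → Zn → ℕ
  | 0, a, _ => a + 1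
  | k + 1, a, z => if z ∈ D a (k + 1) then search D k (a + 1) z else search D k a z

lemma search_measurable {Zn : Type*} [MeasurableSpace Zn] (D : ℕ → ℕ → Set Zn)
    (hD : ∀ a k, MeasurableSet (D a k)) (k : ℕ) : ∀ a, Measurable (search D k a) := by
  induction k with
  | zero => intro a; exact measurable_const
  | succ k ih => intro a; exact Measurable.ite (hD _ _) (ih _) (ih _)

lemma search_bounds {Zn : Type*} (D : ℕ → ℕ → Set Zn) (z : Zn) (k : ℕ) :
    ∀ a, a + 1 ≤ search D k a z ∧ search D k a z ≤ a + k + 1 := by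
  induction k with
  | zero => intro a; simp [search]
  | succ k ih =>
    intro a
    have h1 := ih a
    have h2 := ih (a + 1)
    simp only [search]
    split_ifs <;> omega

lemma search_spec {Zn : Type*} (D : ℕ → ℕ → Set Zn) (z : Zn) (m : ℕ) (k : ℕ) :
    ∀ a, a ≤ m → m < a + k + 2 →
      (m ≤ search D k a z ∧ search D k a z ≤ m + 1) ∨
      ∃ k', 1 ≤ k' ∧ k' ≤ k ∧
        ((z ∈ D m k' ∧ m ≤ search D k a z ∧ search D k a z ≤ m + k' + 1) ∨
         (∃ a', a' + k' + 1 = m ∧ z ∉ D a' k' ∧ search D k a z ≤ m ∧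
            m ≤ search D k a z + k')) := by
  induction k with
  | zero => intro a h1 h2; left; simp only [search]; omega
  | succ k ih =>
    intro a h1 h2
    have b1 := search_bounds D z k a
    have b2 := search_bounds D z k (a + 1)
    by_cases hz : z ∈ D a (k + 1)
    · have e : search D (k + 1) a z = search D k (a + 1) z := by simp [search, hz]
      rw [e]
      by_cases ha : a = m
      · right
        refine ⟨k + 1, by omega, le_refl _, Or.inl ⟨ha ▸ hz, by omega, by omega⟩⟩
      · rcases ih (a + 1) (by omega) (by omega) with h | ⟨k', h3, h4, h5⟩
        · exact Or.inl h
        · exact Or.inr ⟨k', h3, by omega, h5⟩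
    · have e : search D (k + 1) a z = search D k a z := by simp [search, hz]
      rw [e]
      by_cases ha : a + (k + 1) + 1 = m
      · right
        refine ⟨k + 1, by omega, le_refl _, Or.inr ⟨a, ha, hz, by omega, by omega⟩⟩
      · rcases ih a (by omega) (by omega) with h | ⟨k', h3, h4, h5⟩
        · exact Or.inl h
        · exact Or.inr ⟨k', h3, by omega, h5⟩

end core3
/-- Proposition: the binary search estimator, part (i).
Suppose `Δ > 0`, `-∞ < M₋ < M₊ < ∞` (with `M₋ = inf_P θ`, `M₊ = sup_P θ`, `M = M₊ - M₋`),
`N` is the smallest integer with `NΔ > M`, and `Q` is a non-interactive channel with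
identical Markov marginals `Q1` such that `{Q1 P : P ∈ 𝒫}` is dominated. Then there exists
an estimator `θ̂ : Z^n → ℝ` with
`sup_{P ∈ 𝒫} Q P^{⊗n}(|θ̂ - θ(P)| > (l+1)Δ) ≤ 4 ∑_{k=l+1}^{N-2} max(η_A^{(n)}(Q, kΔ), 0)`
for all `l ∈ ℕ`, taking values in `{M₋ + jΔ : j = 1,…,N-1}` if `N ≥ 3` and constantly equal
to `(M₋ + M₊)/2` otherwise. -/
theorem statement11 {X Z : Type*} [MeasurableSpace X] [MeasurableSpace Z]
    (n : ℕ) (hn : 0 < n) (P : Set (Measure X)) (hP : ∀ μ ∈ P, IsProbabilityMeasure μ)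
    (θ : Measure X → ℝ) (Δ : ℝ) (hΔ : 0 < Δ)
    (Mlo Mhi : ℝ) (hMlo : Mlo = sInf (θ '' P)) (hMhi : Mhi = sSup (θ '' P))
    (hne : P.Nonempty) (hbb : BddBelow (θ '' P)) (hba : BddAbove (θ '' P)) (hlt : Mlo < Mhi)
    (Q1 : Kernel X Z) (hQ1 : IsMarkovKernel Q1)
    (hdom : Dominated ((fun μ : Measure X => push (fun x => Q1 x) μ) '' P))
    (N : ℕ) (hN1 : Mhi - Mlo < N * Δ) (hN2 : ∀ m : ℕ, Mhi - Mlo < m * Δ → N ≤ m) :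
    ∃ est : (Fin n → Z) → ℝ, Measurable est ∧
      (∀ L : ℕ, ∀ μ ∈ P,
        (Measure.pi fun _ : Fin n => push (fun x => Q1 x) μ)
            {z | ((L : ℝ) + 1) * Δ < |est z - θ μ|}
          ≤ ENNReal.ofReal (4 * ∑ k ∈ Finset.Icc (L + 1) (N - 2),
              max (etaA
                (fun μ' : Measure X => Measure.pi fun _ : Fin n => push (fun x => Q1 x) μ')
                P θ ((k : ℝ) * Δ)) 0)) ∧
      (if 3 ≤ N then ∀ z, ∃ j : ℕ, 1 ≤ j ∧ j ≤ N - 1 ∧ est z = Mlo + (j : ℝ) * Δ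
       else ∀ z, est z = (Mlo + Mhi) / 2) := by
  obtain ⟨ν, hνσ, hν⟩ := hdom
  have hQP : ∀ μ ∈ P, IsProbabilityMeasure (push (fun x => Q1 x) μ) := by
    intro μ hμ
    have := hP μ hμ
    unfold push
    exact inferInstanceAs (IsProbabilityMeasure (μ.bind Q1))
  let G : Measure X → Measure (Fin n → Z) :=
    fun μ' : Measure X => Measure.pi fun _ : Fin n => push (fun x => Q1 x) μ'
  have hG : ∀ μ ∈ P, IsProbabilityMeasure (G μ) := by
    intro μ hμ
    have := hQP μ hμ
    simp only [G]
    infer_instance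
  have hGν : ∀ μ ∈ P, G μ ≪ Measure.pi fun _ : Fin n => ν.toFinite := by
    intro μ hμ
    have := hQP μ hμ
    exact pi_ac _ _ ((hν _ ⟨μ, hμ, rfl⟩).trans (absolutelyContinuous_toFinite ν)) n
  have hlo : ∀ μ ∈ P, Mlo ≤ θ μ := fun μ hμ => hMlo ▸ csInf_le hbb ⟨μ, hμ, rfl⟩
  have hhi : ∀ μ ∈ P, θ μ ≤ Mhi := fun μ hμ => hMhi ▸ le_csSup hba ⟨μ, hμ, rfl⟩
  by_cases hN : 3 ≤ N
  swap
  · refine ⟨fun _ => (Mlo + Mhi) / 2, measurable_const, ?_, ?_⟩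
    · intro L μ hμ
      have hN' : (N : ℝ) ≤ 2 := by exact_mod_cast (by omega : N ≤ 2)
      have hemp : {z : Fin n → Z | ((L : ℝ) + 1) * Δ < |(Mlo + Mhi) / 2 - θ μ|} = ∅ := by
        ext z
        simp only [Set.mem_ofPred_eq, Set.mem_empty_iff_false, iff_false, not_lt]
        have h1 := hlo μ hμ
        have h2 := hhi μ hμ
        have h3 : (N : ℝ) * Δ ≤ 2 * Δ := by gcongr
        have h4 : 0 ≤ (L : ℝ) * Δ := by positivity
        rw [abs_le]
        constructor <;> linarith
      rw [hemp, measure_empty]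
      exact bot_le
    · rw [if_neg hN]
      intro z; rfl
  choose D hDm hD0 hD1 using fun (a k : ℕ) =>
    etaA_set G P θ hG (Measure.pi fun _ : Fin n => ν.toFinite) hGν
      (Mlo + ((a : ℝ) + 1) * Δ) ((k : ℝ) * Δ)
  refine ⟨fun z => Mlo + (search D (N - 2) 0 z : ℝ) * Δ, ?_, ?_, ?_⟩
  · have := search_measurable D hDm (N - 2) 0
    have h2 : Measurable fun z => (search D (N - 2) 0 z : ℝ) :=
      (measurable_from_top (f := fun j : ℕ => (j : ℝ))).comp this
    exact measurable_const.add (h2.mul_const _)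
  · intro L μ hμ
    change G μ _ ≤ ENNReal.ofReal (4 * ∑ k ∈ Finset.Icc (L + 1) (N - 2),
      max (etaA G P θ ((k : ℝ) * Δ)) 0)
    obtain ⟨m, hm⟩ : ∃ m : ℕ, m = ⌊(θ μ - Mlo) / Δ⌋₊ := ⟨_, rfl⟩
    have hlo' := hlo μ hμ
    have hhi' := hhi μ hμ
    have hm1 : (m : ℝ) * Δ ≤ θ μ - Mlo := by
      rw [← le_div_iff₀ hΔ, hm]
      exact Nat.floor_le (div_nonneg (by linarith) hΔ.le)
    have hm2 : θ μ - Mlo < ((m : ℝ) + 1) * Δ := by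
      rw [← div_lt_iff₀ hΔ, hm]
      exact Nat.lt_floor_add_one _
    have hmN : m < N := by
      have : (m : ℝ) * Δ < N * Δ := by linarith
      exact_mod_cast lt_of_mul_lt_mul_right this hΔ.le
    let R : ℕ → Set (Fin n → Z) := fun k => {z | ∃ a', a' + k + 1 = m ∧ z ∉ D a' k}
    have hR : ∀ k, G μ (R k) ≤ ENNReal.ofReal (2 * max (etaA G P θ ((k : ℝ) * Δ)) 0) := by
      intro k
      by_cases hk : k + 1 ≤ m
      · have hsub : R k ⊆ (D (m - 1 - k) k)ᶜ := by
          rintro z ⟨a', ha', hz⟩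
          have : a' = m - 1 - k := by omega
          exact this ▸ hz
        refine (measure_mono hsub).trans (hD1 _ _ μ hμ ?_)
        have : ((m - 1 - k : ℕ) : ℝ) + k + 1 = m := by
          exact_mod_cast (by omega : (m - 1 - k) + k + 1 = m)
        have h5 : (((m - 1 - k : ℕ) : ℝ) + 1) * Δ + k * Δ = m * Δ := by
          rw [← this]; ring
        linarith
      · have hsub : R k = ∅ := by
          ext z
          simp only [R, Set.mem_ofPred_eq, Set.mem_empty_iff_false, iff_false]
          rintro ⟨a', ha', _⟩
          omega
        rw [hsub, measure_empty]
        exact bot_le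
    have hL : ∀ k, G μ (D m k) ≤ ENNReal.ofReal (2 * max (etaA G P θ ((k : ℝ) * Δ)) 0) :=
      fun k => hD0 m k μ hμ (by linarith)
    have hcov : {z | ((L : ℝ) + 1) * Δ < |Mlo + (search D (N - 2) 0 z : ℝ) * Δ - θ μ|} ⊆
        ⋃ k ∈ Finset.Icc (L + 1) (N - 2), (D m k ∪ R k) := by
      intro z hz
      simp only [Set.mem_ofPred_eq] at hz
      have hLnn : (0 : ℝ) ≤ (L : ℝ) * Δ := by positivity
      have hgen : ∀ k' : ℕ, (m ≤ search D (N - 2) 0 z + k') →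
          (search D (N - 2) 0 z ≤ m + k' + 1) → L < k' := by
        intro k' c1 c2
        generalize search D (N - 2) 0 z = j at *
        have d1 : (m : ℝ) * Δ ≤ (j + k') * Δ := by
          gcongr; exact_mod_cast c1
        have d2 : (j : ℝ) * Δ ≤ (m + k' + 1) * Δ := by
          gcongr; exact_mod_cast c2
        have d3 : |Mlo + (j : ℝ) * Δ - θ μ| ≤ ((k' : ℝ) + 1) * Δ := by
          rw [abs_le]
          constructor <;> nlinarith
        have d4 := lt_of_mul_lt_mul_right (hz.trans_le d3) hΔ.le
        exact_mod_cast (by linarith : (L : ℝ) < k')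
      rcases search_spec D z m (N - 2) 0 (Nat.zero_le _) (by omega) with
        ⟨h1, h2⟩ | ⟨k', h1, h2, h3⟩
      · have := hgen 0 (by omega) (by omega)
        omega
      · have hk : L < k' := by
          rcases h3 with ⟨_, h4, h5⟩ | ⟨_, _, _, h4, h5⟩
          · exact hgen k' (by omega) (by omega)
          · exact hgen k' (by omega) (by omega)
        simp only [Set.mem_iUnion]
        refine ⟨k', Finset.mem_Icc.2 ⟨hk, h2⟩, ?_⟩
        rcases h3 with ⟨h4, _, _⟩ | ⟨a', h4, h5, _, _⟩
        · exact Or.inl h4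
        · exact Or.inr ⟨a', h4, h5⟩
    refine (measure_mono hcov).trans ((measure_biUnion_finset_le _ _).trans ?_)
    rw [Finset.mul_sum, ENNReal.ofReal_sum_of_nonneg
      (fun k _ => mul_nonneg (by norm_num) (le_max_right _ _))]
    refine Finset.sum_le_sum fun k _ => (measure_union_le _ _).trans ?_
    refine (add_le_add (hL k) (hR k)).trans ?_
    rw [← ENNReal.ofReal_add (mul_nonneg (by norm_num) (le_max_right _ _))
      (mul_nonneg (by norm_num) (le_max_right _ _))]
    refine ENNReal.ofReal_le_ofReal (le_of_eq ?_)
    ring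
  · rw [if_pos hN]
    intro z
    have := search_bounds D z (N - 2) 0
    exact ⟨search D (N - 2) 0 z, by omega, by omega, rfl⟩

end PrivacyPaper
end

section
/- Fix α ∈ (0,∞) and a finite constant Δ > 0; suppose P is convex, θ : P → ℝ is linear with −∞ < M_− < M_+ < ∞ (M_− = inf_P θ(P), M_+ = sup_P θ(P)), and suppose there exists a bounded measurable ℓ* : X → ℝ with ‖ℓ*‖∞ ≤ 1 and inf{ ∫ ℓ* dP0 − ∫ ℓ* dP1 : P0, P1 ∈ P, θ(P0) − θ(P1) ≥ Δ } > 0. Let Q1 = Q1^{(α,ℓ*)} be the binary channel with Z = {−z0, z0} and Q the corresponding non-interactive channel from X^n to Z^n. Then there exist a measurable estimator θ̂ : Z^n → ℝ satisfying the binary-search tail bound sup_{P∈P} Q P^⊗n( |θ̂ − θ(P)| > (l+1)Δ ) ≤ 4·∑_{k=l+1}^{N−2} max( η_A^{(n)}(Q, kΔ), 0 ) for every l ∈ ℕ0 (N the smallest integer with NΔ > M_+ − M_−) and an affine function g : ℝ → ℝ such that | Π_{[M_−,M_+]}( g(z̄_n) ) − θ̂(z) | ≤ 2Δ for all z ∈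 Z^n, where z̄_n = (1/n)∑_{i=1}^n z_i and Π_{[M_−,M_+]} is the projection of ℝ onto [M_−, M_+]. -/
open MeasureTheory ProbabilityTheory ENNReal

namespace PrivacyPaper

variable {X Z Ω : Type*} [MeasurableSpace X] [MeasurableSpace Z] [MeasurableSpace Ω]

/-- Binary search. -/
noncomputable def srch (T : ℕ → ℕ → Prop) : ℕ → ℕ → ℕ
  | 0, i => i + 1
  | k + 1, i => open Classical in
      if T (i + 1) (i + 1 + (k + 1)) then srch T k (i + 1) else srch T k i

lemma srch_bounds (T : ℕ → ℕ → Prop) (k : ℕ) : ∀ i, i + 1 ≤ srch T k i ∧ srch T k i ≤ i + k + 1 := by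
  induction k with
  | zero => intro i; simp [srch]
  | succ k ih =>
    intro i
    have h1 := ih i
    have h2 := ih (i + 1)
    rw [srch]
    split_ifs <;> omega

lemma srch_upper (T : ℕ → ℕ → Prop) (l i0 k : ℕ) : ∀ i, i ≤ i0 → i0 + 1 + l < srch T k i →
    ∃ k', l + 1 ≤ k' ∧ k' ≤ k ∧ T (i0 + 1) (i0 + 1 + k') := by
  induction k with
  | zero => intro i hi h; simp [srch] at h; omega
  | succ k ih =>
    intro i hi h
    have hb := srch_bounds T k (i + 1)
    rw [srch] at h
    split_ifs at h with hT
    · rcases hi.eq_or_lt with rfl | hlt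
      · exact ⟨k + 1, by omega, le_rfl, hT⟩
      · obtain ⟨k', h1, h2, h3⟩ := ih (i + 1) hlt h
        exact ⟨k', h1, by omega, h3⟩
    · obtain ⟨k', h1, h2, h3⟩ := ih i hi h
      exact ⟨k', h1, by omega, h3⟩

lemma srch_lower (T : ℕ → ℕ → Prop) (l j0 k : ℕ) : ∀ i, j0 ≤ i + k + 2 → srch T k i + 1 + l < j0 →
    ∃ k' a, l + 1 ≤ k' ∧ k' ≤ k ∧ a + k' + 1 = j0 ∧ ¬ T a (a + k') := by
  induction k with
  | zero => intro i hi h; simp [srch] at h; omega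
  | succ k ih =>
    intro i hi h
    have hb := srch_bounds T k i
    rw [srch] at h
    split_ifs at h with hT
    · obtain ⟨k', a, h1, h2, h3⟩ := ih (i + 1) (by omega) h
      exact ⟨k', a, h1, by omega, h3⟩
    · rcases hi.eq_or_lt with rfl | hlt
      · exact ⟨k + 1, i + 1, by omega, le_rfl, by omega, hT⟩
      · obtain ⟨k', a, h1, h2, h3⟩ := ih i (by omega) h
        exact ⟨k', a, h1, by omega, h3⟩

lemma srch_left (T : ℕ → ℕ → Prop) (k : ℕ) : ∀ i, srch T k i = i + 1 ∨
    ∃ a b, a + 1 = srch T k i ∧ i + 1 ≤ a ∧ a < b ∧ T a b := by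
  induction k with
  | zero => intro i; simp [srch]
  | succ k ih =>
    intro i
    rw [srch]
    split_ifs with hT
    · rcases ih (i + 1) with h | ⟨a, b, h1, h2, h3, h4⟩
      · exact Or.inr ⟨i + 1, _, h.symm, le_rfl, by omega, hT⟩
      · exact Or.inr ⟨a, b, h1, by omega, h3, h4⟩
    · exact ih i

lemma srch_right (T : ℕ → ℕ → Prop) (k : ℕ) : ∀ i, srch T k i = i + k + 1 ∨
    ∃ a b, b = srch T k i + 1 ∧ a < b ∧ b ≤ i + k + 1 ∧ ¬ T a b := by
  induction k with
  | zero => intro i; simp [srch]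
  | succ k ih =>
    intro i
    rw [srch]
    split_ifs with hT
    · rcases ih (i + 1) with h | ⟨a, b, h1, h2, h3, h4⟩
      · left; omega
      · exact Or.inr ⟨a, b, h1, h2, by omega, h4⟩
    · rcases ih i with h | ⟨a, b, h1, h2, h3, h4⟩
      · exact Or.inr ⟨i + 1, i + 1 + (k + 1), by omega, by omega, by omega, hT⟩
      · exact Or.inr ⟨a, b, h1, h2, by omega, h4⟩

lemma srch_measurable {Y : Type*} [MeasurableSpace Y] (T : ℕ → ℕ → Set ℝ)
    (hT : ∀ a b, MeasurableSet (T a b)) (m : Y → ℝ) (hm : Measurable m) (k : ℕ) :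
    ∀ i, Measurable (fun z => srch (fun a b => m z ∈ T a b) k i) := by
  classical
  induction k with
  | zero => intro i; simp [srch]
  | succ k ih =>
    intro i
    simp only [srch]
    exact Measurable.ite (hm (hT _ _)) (ih _) (ih _)

/-! Bernoulli weights -/

/-- weight -/
noncomputable def wt (n : ℕ) (p : ℝ) (s : Fin n → Bool) : ℝ := ∏ i, (if s i then p else 1 - p)

/-- count -/
def cnt (n : ℕ) (s : Fin n → Bool) : ℕ := ∑ i, (if s i then 1 else 0)

lemma wt_eq (n : ℕ) (p : ℝ) (s : Fin n → Bool) :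
    wt n p s = p ^ (cnt n s) * (1 - p) ^ (n - cnt n s) := by
  have h1 : (∑ i, (if s i then 0 else 1)) = n - cnt n s := by
    have : (∑ i, (if s i then 0 else 1)) + cnt n s = n := by
      unfold cnt
      rw [← Finset.sum_add_distrib]
      have : ∀ i ∈ (Finset.univ : Finset (Fin n)), (if s i then 0 else 1) + (if s i then 1 else 0) = 1 := by
        intro i _; split_ifs <;> rfl
      rw [Finset.sum_congr rfl this]; simp
    omega
  rw [← h1]
  unfold wt cnt
  rw [← Finset.prod_pow_eq_pow_sum, ← Finset.prod_pow_eq_pow_sum, ← Finset.prod_mul_distrib]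
  refine Finset.prod_congr rfl fun i _ => ?_
  split_ifs <;> simp

lemma cnt_le (n : ℕ) (s : Fin n → Bool) : cnt n s ≤ n := by
  unfold cnt
  calc _ ≤ ∑ i : Fin n, 1 := Finset.sum_le_sum fun i _ => by split_ifs <;> simp
    _ = n := by simp

lemma wt_nonneg (n : ℕ) {p : ℝ} (h0 : 0 ≤ p) (h1 : p ≤ 1) (s : Fin n → Bool) : 0 ≤ wt n p s := by
  refine Finset.prod_nonneg fun i _ => ?_
  split_ifs <;> linarith

lemma wt_sum (n : ℕ) (p : ℝ) : ∑ s, wt n p s = 1 := by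
  unfold wt
  have := (Fintype.prod_sum (fun (_ : Fin n) (b : Bool) => if b then p else 1 - p))
  rw [← this]
  simp

lemma wt_cont (n : ℕ) (s : Fin n → Bool) : Continuous (fun p => wt n p s) := by
  unfold wt
  refine continuous_finsetProd _ fun i _ => ?_
  split_ifs <;> fun_prop

lemma exG (n : ℕ) {a b : ℝ} (ha : 0 < a) (hab : a < b) (hb : b < 1) : ∃ G, a ≤ G ∧ G ≤ b ∧
    ∀ s, (G * n ≤ cnt n s → wt n a s ≤ wt n b s) ∧ ((cnt n s : ℝ) < G * n → wt n b s ≤ wt n a s) := by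
  have hb0 : 0 < b := ha.trans hab
  have ha1 : 0 < 1 - a := by linarith
  have hb1 : 0 < 1 - b := by linarith
  set u := Real.log b - Real.log a with hu
  set v := Real.log (1 - a) - Real.log (1 - b) with hv
  have hu0 : 0 < u := by have := Real.log_lt_log ha hab; linarith
  have hv0 : 0 < v := by have := Real.log_lt_log hb1 (by linarith : 1 - b < 1 - a); linarith
  have k1 : u ≤ (b - a) / a := by
    have := Real.log_le_sub_one_of_pos (div_pos hb0 ha)
    rw [Real.log_div hb0.ne' ha.ne'] at this
    rw [sub_div, div_self ha.ne']; exact this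
  have k2 : (b - a) / b ≤ u := by
    have := Real.log_le_sub_one_of_pos (div_pos ha hb0)
    rw [Real.log_div ha.ne' hb0.ne'] at this
    rw [sub_div, div_self hb0.ne']; linarith
  have k3 : v ≤ (b - a) / (1 - b) := by
    have := Real.log_le_sub_one_of_pos (div_pos ha1 hb1)
    rw [Real.log_div ha1.ne' hb1.ne'] at this
    have e : (b - a) / (1 - b) = (1 - a) / (1 - b) - 1 := by field_simp; ring
    rw [e]; exact this
  have k4 : (b - a) / (1 - a) ≤ v := by
    have := Real.log_le_sub_one_of_pos (div_pos hb1 ha1)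
    rw [Real.log_div hb1.ne' ha1.ne'] at this
    have e : (b - a) / (1 - a) = 1 - (1 - b) / (1 - a) := by field_simp; ring
    rw [e]; linarith
  rw [le_div_iff₀ ha] at k1
  rw [div_le_iff₀ hb0] at k2
  rw [le_div_iff₀ hb1] at k3
  rw [div_le_iff₀ ha1] at k4
  have huv : 0 < u + v := by linarith
  have key : ∀ (p : ℝ), 0 < p → 0 < 1 - p → ∀ s, Real.log (wt n p s) =
      cnt n s * Real.log p + ((n : ℝ) - cnt n s) * Real.log (1 - p) := by
    intro p h0 h1 s
    rw [wt_eq, Real.log_mul (by positivity) (by positivity), Real.log_pow, Real.log_pow,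
      Nat.cast_sub (cnt_le n s)]
  have pos : ∀ (p : ℝ), 0 < p → 0 < 1 - p → ∀ s, 0 < wt n p s := by
    intro p h0 h1 s
    rw [wt_eq]; positivity
  refine ⟨v / (u + v), ?_, ?_, fun s => ⟨fun h => ?_, fun h => ?_⟩⟩
  · rw [le_div_iff₀ huv]; linarith
  · rw [div_le_iff₀ huv]; linarith
  · rw [div_mul_eq_mul_div, div_le_iff₀ huv] at h
    rw [← Real.log_le_log_iff (pos a ha ha1 s) (pos b hb0 hb1 s), key a ha ha1, key b hb0 hb1]
    rw [hu, hv] at h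
    nlinarith
  · rw [div_mul_eq_mul_div, lt_div_iff₀ huv] at h
    rw [← Real.log_le_log_iff (pos b hb0 hb1 s) (pos a ha ha1 s), key a ha ha1, key b hb0 hb1]
    rw [hu, hv] at h
    nlinarith

lemma tail_mono (n : ℕ) {p a : ℝ} (hp : 0 < p) (hpa : p ≤ a) (ha : a < 1) (c : ℝ) :
    (∑ s, if c ≤ cnt n s then wt n p s else 0) ≤ ∑ s, if c ≤ cnt n s then wt n a s else 0 := by
  rcases hpa.eq_or_lt with rfl | hlt
  · exact le_rfl
  obtain ⟨G, -, -, hG⟩ := exG n hp hlt ha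
  by_cases h : G * n ≤ c
  · refine Finset.sum_le_sum fun s _ => ?_
    split_ifs with h1
    · exact (hG s).1 (h.trans h1)
    · exact le_rfl
  · push Not at h
    have e : ∀ q, (∑ s, if c ≤ cnt n s then wt n q s else 0) =
        1 - ∑ s, if c ≤ cnt n s then 0 else wt n q s := by
      intro q
      rw [← wt_sum n q, ← Finset.sum_sub_distrib]
      refine Finset.sum_congr rfl fun s _ => ?_
      split_ifs <;> simp
    rw [e p, e a]
    refine sub_le_sub_left (Finset.sum_le_sum fun s _ => ?_) _
    split_ifs with h1
    · exact le_rfl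
    · push Not at h1
      exact (hG s).2 (h1.trans h)

lemma tail_anti (n : ℕ) {p a : ℝ} (hp : 0 < p) (hpa : p ≤ a) (ha : a < 1) (c : ℝ) :
    (∑ s, if c ≤ cnt n s then 0 else wt n a s) ≤ ∑ s, if c ≤ cnt n s then 0 else wt n p s := by
  have e : ∀ q, (∑ s, if c ≤ cnt n s then wt n q s else 0) =
        1 - ∑ s, if c ≤ cnt n s then 0 else wt n q s := by
      intro q
      rw [← wt_sum n q, ← Finset.sum_sub_distrib]
      refine Finset.sum_congr rfl fun s _ => ?_
      split_ifs <;> simp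
  have := tail_mono n hp hpa ha c
  rw [e p, e a] at this
  linarith

/-- Two-point measure. -/
noncomputable def bern (z0 p : ℝ) : Measure ℝ :=
  ENNReal.ofReal p • Measure.dirac z0 + ENNReal.ofReal (1 - p) • Measure.dirac (-z0)

/-- Bernoulli on Bool. -/
noncomputable def bernB (p : ℝ) : Measure Bool :=
  ENNReal.ofReal p • Measure.dirac true + ENNReal.ofReal (1 - p) • Measure.dirac false

/-- value -/
noncomputable def zval (z0 : ℝ) (b : Bool) : ℝ := if b then z0 else -z0

lemma bern_map (z0 p : ℝ) : bern z0 p = (bernB p).map (zval z0) := by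
  have hm : Measurable (zval z0) := measurable_of_finite _
  unfold bern bernB
  rw [Measure.map_add _ _ hm, Measure.map_smul, Measure.map_smul, Measure.map_dirac' hm,
    Measure.map_dirac' hm]
  simp [zval]

lemma bernB_prob {p : ℝ} (h0 : 0 ≤ p) (h1 : p ≤ 1) : IsProbabilityMeasure (bernB p) := by
  constructor
  unfold bernB
  simp
  rw [← ENNReal.ofReal_add h0 (by linarith)]; simp

lemma bern_prob {z0 p : ℝ} (h0 : 0 ≤ p) (h1 : p ≤ 1) : IsProbabilityMeasure (bern z0 p) := by
  have := bernB_prob h0 h1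
  rw [bern_map]
  exact Measure.isProbabilityMeasure_map (measurable_of_finite _).aemeasurable

lemma bernpi_map (n : ℕ) (z0 : ℝ) {p : ℝ} (h0 : 0 ≤ p) (h1 : p ≤ 1) :
    (Measure.pi fun _ : Fin n => bern z0 p) =
      (Measure.pi fun _ : Fin n => bernB p).map (fun s i => zval z0 (s i)) := by
  have := bernB_prob h0 h1
  have := bern_prob (z0 := z0) h0 h1
  rw [bern_map] at this ⊢
  rw [Measure.pi_map_pi]
  intro i; exact (measurable_of_finite _).aemeasurable

lemma bernB_single (n : ℕ) {p : ℝ} (h0 : 0 ≤ p) (h1 : p ≤ 1) (s : Fin n → Bool) :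
    (Measure.pi fun _ : Fin n => bernB p) {s} = ENNReal.ofReal (wt n p s) := by
  have := bernB_prob h0 h1
  rw [Measure.pi_singleton, wt, ENNReal.ofReal_prod_of_nonneg]
  · refine Finset.prod_congr rfl fun i _ => ?_
    unfold bernB
    cases s i <;> simp
  · intro i _; split_ifs <;> linarith

lemma bern_integral (n : ℕ) (z0 : ℝ) {p : ℝ} (h0 : 0 ≤ p) (h1 : p ≤ 1) (φ : (Fin n → ℝ) → ℝ)
    (hφ : Measurable φ) :
    ∫ z, φ z ∂(Measure.pi fun _ : Fin n => bern z0 p) =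
      ∑ s, wt n p s * φ (fun i => zval z0 (s i)) := by
  have := bernB_prob h0 h1
  rw [bernpi_map n z0 h0 h1, integral_map (measurable_of_finite _).aemeasurable
    hφ.aestronglyMeasurable, integral_fintype Integrable.of_finite]
  refine Finset.sum_congr rfl fun s _ => ?_
  rw [measureReal_def, bernB_single n h0 h1, ENNReal.toReal_ofReal (wt_nonneg n h0 h1 s), smul_eq_mul]

open Classical in
lemma bern_measure (n : ℕ) (z0 : ℝ) {p : ℝ} (h0 : 0 ≤ p) (h1 : p ≤ 1) (A : Set (Fin n → ℝ))
    (hA : MeasurableSet A) :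
    (Measure.pi fun _ : Fin n => bern z0 p) A =
      ENNReal.ofReal (∑ s, if (fun i => zval z0 (s i)) ∈ A then wt n p s else 0) := by
  have := bern_prob (z0 := z0) h0 h1
  have h := bern_integral n z0 h0 h1 (A.indicator 1) (measurable_one.indicator hA)
  rw [integral_indicator_one hA, measureReal_def] at h
  rw [← ENNReal.ofReal_toReal (measure_ne_top _ A), h]
  congr 1
  refine Finset.sum_congr rfl fun s _ => ?_
  simp [Set.indicator_apply]

lemma zval_mean (n : ℕ) (hn : 0 < n) (z0 : ℝ) (s : Fin n → Bool) :
    (∑ i, zval z0 (s i)) / n = z0 * (2 * (cnt n s / n) - 1) := by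
  have : (∑ i, zval z0 (s i)) = z0 * (2 * cnt n s - n) := by
    have e : ∀ i, zval z0 (s i) = 2 * z0 * (if s i then (1:ℝ) else 0) - z0 := by
      intro i; unfold zval; split_ifs <;> ring
    simp_rw [e]
    rw [Finset.sum_sub_distrib, ← Finset.mul_sum]
    simp [cnt]
    ring
  rw [this]
  have : (n : ℝ) ≠ 0 := by positivity
  field_simp

/-- overlap -/
noncomputable def ovl (n : ℕ) (a b : ℝ) : ℝ := ∑ s, min (wt n a s) (wt n b s)

lemma ovl_cont (n : ℕ) : Continuous (fun q : ℝ × ℝ => ovl n q.1 q.2) := by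
  unfold ovl
  refine continuous_finsetSum _ fun s _ => ?_
  exact ((wt_cont n s).comp continuous_fst).min ((wt_cont n s).comp continuous_snd)

lemma isTest_zero {Y : Type*} [MeasurableSpace Y] : IsTest (fun _ : Y => (0:ℝ)) :=
  ⟨measurable_const, fun _ => by norm_num⟩

lemma ovl_le_pair (n : ℕ) (z0 : ℝ) {a b : ℝ} (ha0 : 0 ≤ a) (ha1 : a ≤ 1) (hb0 : 0 ≤ b) (hb1 : b ≤ 1) :
    ovl n a b ≤ pairAffinity (Measure.pi fun _ : Fin n => bern z0 a)
      (Measure.pi fun _ : Fin n => bern z0 b) := by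
  unfold pairAffinity
  refine le_csInf ⟨_, _, isTest_zero, rfl⟩ ?_
  rintro r ⟨φ, ⟨hm, h01⟩, rfl⟩
  unfold testRisk
  rw [bern_integral n z0 ha0 ha1 _ hm, bern_integral n z0 hb0 hb1 (fun z => 1 - φ z) (measurable_const.sub hm),
    ← Finset.sum_add_distrib]
  refine Finset.sum_le_sum fun s _ => ?_
  obtain ⟨h0, h1⟩ := h01 (fun i => zval z0 (s i))
  have m1 := min_le_left (wt n a s) (wt n b s)
  have m2 := min_le_right (wt n a s) (wt n b s)
  nlinarith [mul_nonneg (sub_nonneg.2 m1) h0, mul_nonneg (sub_nonneg.2 m2) (sub_nonneg.2 h1)]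

lemma pair_le_one {Y : Type*} [MeasurableSpace Y] (μ0 μ1 : Measure Y) (h1 : IsProbabilityMeasure μ1) :
    pairAffinity μ0 μ1 ≤ 1 := by
  unfold pairAffinity
  refine csInf_le ⟨0, ?_⟩ ⟨_, isTest_zero, ?_⟩
  · rintro r ⟨φ, ⟨hm, h01⟩, rfl⟩
    exact add_nonneg (integral_nonneg fun z => (h01 z).1)
      (integral_nonneg fun z => sub_nonneg.2 (h01 z).2)
  · simp [testRisk]

lemma convComb_prob_s12 {Y : Type*} [MeasurableSpace Y] (M : Set (Measure Y))
    (h : ∀ μ ∈ M, IsProbabilityMeasure μ) : ∀ μ ∈ convComb M, IsProbabilityMeasure μ := by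
  rintro μ ⟨m, w, ν, hw, hν, rfl⟩
  constructor
  rw [Measure.finsetSum_apply]
  rw [← hw]
  refine Finset.sum_congr rfl fun i _ => ?_
  have := h _ (hν i)
  simp

lemma subset_convComb {Y : Type*} [MeasurableSpace Y] (M : Set (Measure Y)) : M ⊆ convComb M := by
  intro μ h
  exact ⟨1, fun _ => 1, fun _ => μ, by simp, fun _ => h, by simp⟩

lemma pair_le_etaA {X Y : Type*} [MeasurableSpace X] [MeasurableSpace Y]
    (QPn : Measure X → Measure Y) (P : Set (Measure X)) (θ : Measure X → ℝ)
    (hQ : ∀ μ ∈ P, IsProbabilityMeasure (QPn μ)) (D t : ℝ) (P0 P1 : Measure X)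
    (h0 : P0 ∈ P) (h1 : P1 ∈ P) (ht0 : θ P0 ≤ t) (ht1 : t + D ≤ θ P1) :
    pairAffinity (QPn P0) (QPn P1) ≤ etaA QPn P θ D := by
  have hub : ∀ t, ∀ r ∈ {r : ℝ | ∃ μ0 ∈ (convComb (QPn '' {μ | μ ∈ P ∧ θ μ ≤ t})),
      ∃ μ1 ∈ (convComb (QPn '' {μ | μ ∈ P ∧ t + D ≤ θ μ})), r = pairAffinity μ0 μ1}, r ≤ 1 := by
    rintro t r ⟨μ0, -, μ1, hμ1, rfl⟩
    refine pair_le_one _ _ (convComb_prob_s12 _ ?_ μ1 hμ1)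
    rintro _ ⟨μ, hμ, rfl⟩
    exact hQ μ hμ.1
  refine le_trans ?_ (le_ciSup (f := fun t => setAffinity (convComb (QPn '' {μ | μ ∈ P ∧ θ μ ≤ t}))
    (convComb (QPn '' {μ | μ ∈ P ∧ t + D ≤ θ μ}))) ⟨1, ?_⟩ t)
  · exact le_csSup ⟨1, hub t⟩ ⟨_, subset_convComb _ ⟨P0, ⟨h0, ht0⟩, rfl⟩, _,
      subset_convComb _ ⟨P1, ⟨h1, ht1⟩, rfl⟩, rfl⟩
  · rintro _ ⟨t, rfl⟩
    exact Real.sSup_le (hub t) zero_le_one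

/-- Channel pushforward. -/
lemma push_eq {X : Type*} [MeasurableSpace X] (α : ℝ) (ℓ : X → ℝ) (hm : Measurable ℓ)
    (μ : Measure X) [IsProbabilityMeasure μ] (z0 : ℝ)
    (hz : z0 = supNorm ℓ * ((Real.exp α + 1) / (Real.exp α - 1))) (hz0 : 0 < z0)
    (hb : ∀ x, |ℓ x| ≤ z0) :
    push (binChannel α ℓ) μ = bern z0 ((1 + (∫ x, ℓ x ∂μ) / z0) / 2) := by
  have hint : Integrable ℓ μ := Integrable.of_bound hm.aestronglyMeasurable z0
    (Filter.Eventually.of_forall hb)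
  have e1 : ∫⁻ x, ENNReal.ofReal ((1 + ℓ x / z0) / 2) ∂μ =
      ENNReal.ofReal ((1 + (∫ x, ℓ x ∂μ) / z0) / 2) := by
    rw [← ofReal_integral_eq_lintegral_ofReal]
    · rw [integral_div, integral_add (by simp) (hint.div_const _), integral_div]; simp
    · exact ((integrable_const _).add (hint.div_const _)).div_const _
    · refine Filter.Eventually.of_forall fun x => ?_
      have := (abs_le.1 (hb x)).1
      have : -1 ≤ ℓ x / z0 := by rw [le_div_iff₀ hz0]; linarith
      simp only [Pi.zero_apply]; linarith
  have e2 : ∫⁻ x, ENNReal.ofReal ((1 - ℓ x / z0) / 2) ∂μ =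
      ENNReal.ofReal (1 - ((1 + (∫ x, ℓ x ∂μ) / z0) / 2)) := by
    rw [← ofReal_integral_eq_lintegral_ofReal]
    · rw [integral_div, integral_sub (by simp) (hint.div_const _), integral_div]; simp; ring_nf
    · exact ((integrable_const _).sub (hint.div_const _)).div_const _
    · refine Filter.Eventually.of_forall fun x => ?_
      have := (abs_le.1 (hb x)).2
      have : ℓ x / z0 ≤ 1 := by rw [div_le_iff₀ hz0]; linarith
      simp only [Pi.zero_apply]; linarith
  have hbm : Measurable (binChannel α ℓ) := by
    refine Measure.measurable_of_measurable_coe _ fun s hs => ?_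
    unfold binChannel
    simp only [Measure.coe_add, Measure.coe_smul, Pi.add_apply, Pi.smul_apply, smul_eq_mul]
    fun_prop
  ext A hA
  unfold push
  rw [Measure.bind_apply hA hbm.aemeasurable]
  unfold binChannel bern
  rw [← hz]
  simp only [Measure.coe_add, Measure.coe_smul, Pi.add_apply, Pi.smul_apply, smul_eq_mul]
  rw [lintegral_add_left (by fun_prop), lintegral_mul_const _ (by fun_prop),
    lintegral_mul_const _ (by fun_prop), e1, e2]

lemma test_exists {X : Type*} [MeasurableSpace X] (n : ℕ) (hn : 0 < n) (z0 ρ : ℝ) (hz0 : 0 < z0)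
    (hρ : ρ < z0) (P : Set (Measure X)) (θ F : Measure X → ℝ)
    (Qn : Measure X → Measure (Fin n → ℝ))
    (hQ : ∀ μ ∈ P, Qn μ = Measure.pi fun _ : Fin n => bern z0 ((1 + F μ / z0) / 2))
    (hF : ∀ μ ∈ P, |F μ| ≤ ρ) (t D ε : ℝ) (hε : 0 < ε)
    (hsep : ∀ P0 ∈ P, ∀ P1 ∈ P, θ P0 ≤ t → t + D ≤ θ P1 → F P0 + ε ≤ F P1) :
    ∃ T : Set ℝ, MeasurableSet T ∧
      (∀ μ ∈ P, θ μ ≤ t → Qn μ {z | (∑ i, z i) / n ∈ T} ≤ ENNReal.ofReal (max (etaA Qn P θ D) 0)) ∧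
      (∀ μ ∈ P, t + D ≤ θ μ → Qn μ {z | (∑ i, z i) / n ∉ T} ≤
        ENNReal.ofReal (max (etaA Qn P θ D) 0)) ∧
      (∀ y ∈ T, ∀ μ ∈ P, θ μ ≤ t → F μ ≤ y) ∧ (∀ y ∉ T, ∀ μ ∈ P, t + D ≤ θ μ → y ≤ F μ) := by
  classical
  by_cases hH1 : ∃ μ ∈ P, t + D ≤ θ μ
  swap
  · push Not at hH1
    refine ⟨∅, MeasurableSet.empty, by simp, fun μ h h' => absurd (hH1 μ h) (not_lt.2 h'), by simp,
      fun y _ μ h h' => absurd (hH1 μ h) (not_lt.2 h')⟩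
  by_cases hH0 : ∃ μ ∈ P, θ μ ≤ t
  swap
  · push Not at hH0
    refine ⟨Set.univ, MeasurableSet.univ, fun μ h h' => absurd (hH0 μ h) (not_lt.2 h'), by simp,
      fun y _ μ h h' => absurd (hH0 μ h) (not_lt.2 h'), by simp⟩
  obtain ⟨ν0, hν0, hν0t⟩ := hH0
  obtain ⟨ν1, hν1, hν1t⟩ := hH1
  set q : Measure X → ℝ := fun μ => (1 + F μ / z0) / 2 with hq
  set lo := (1 - ρ / z0) / 2 with hlo
  set hi := (1 + ρ / z0) / 2 with hhi
  have hρz : ρ / z0 < 1 := by rw [div_lt_one hz0]; exact hρ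
  have hlo0 : 0 < lo := by rw [hlo]; linarith
  have hhi1 : hi < 1 := by rw [hhi]; linarith
  have hqlo : ∀ μ ∈ P, lo ≤ q μ := by
    intro μ h
    have := (abs_le.1 (hF μ h)).1
    have : -ρ / z0 ≤ F μ / z0 := div_le_div_of_nonneg_right this hz0.le
    rw [neg_div] at this
    simp only [hq, hlo]; linarith
  have hqhi : ∀ μ ∈ P, q μ ≤ hi := by
    intro μ h
    have := (abs_le.1 (hF μ h)).2
    have : F μ / z0 ≤ ρ / z0 := div_le_div_of_nonneg_right this hz0.le
    simp only [hq, hhi]; linarith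
  have hFq : ∀ μ, F μ = z0 * (2 * q μ - 1) := by
    intro μ; simp only [hq]; field_simp; ring
  set S0 := q '' {μ | μ ∈ P ∧ θ μ ≤ t} with hS0
  set S1 := q '' {μ | μ ∈ P ∧ t + D ≤ θ μ} with hS1
  have ne0 : S0.Nonempty := ⟨_, ν0, ⟨hν0, hν0t⟩, rfl⟩
  have ne1 : S1.Nonempty := ⟨_, ν1, ⟨hν1, hν1t⟩, rfl⟩
  have bd0 : BddAbove S0 := ⟨hi, by rintro _ ⟨μ, h, rfl⟩; exact hqhi μ h.1⟩
  have bd1 : BddBelow S1 := ⟨lo, by rintro _ ⟨μ, h, rfl⟩; exact hqlo μ h.1⟩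
  set a := sSup S0 with ha
  set b := sInf S1 with hb
  have hqa : ∀ μ ∈ P, θ μ ≤ t → q μ ≤ a := fun μ h h' => le_csSup bd0 ⟨μ, ⟨h, h'⟩, rfl⟩
  have hqb : ∀ μ ∈ P, t + D ≤ θ μ → b ≤ q μ := fun μ h h' => csInf_le bd1 ⟨μ, ⟨h, h'⟩, rfl⟩
  have ha0 : 0 < a := hlo0.trans_le ((hqlo ν0 hν0).trans (hqa ν0 hν0 hν0t))
  have hb1 : b < 1 := ((hqb ν1 hν1 hν1t).trans (hqhi ν1 hν1)).trans_lt hhi1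
  have hab : a < b := by
    have : a + ε / z0 / 2 ≤ b := by
      refine le_csInf ne1 ?_
      rintro _ ⟨μ1, h1, rfl⟩
      rw [← le_sub_iff_add_le]
      refine csSup_le ne0 ?_
      rintro _ ⟨μ0, h0, rfl⟩
      have := hsep μ0 h0.1 μ1 h1.1 h0.2 h1.2
      have := div_le_div_of_nonneg_right this hz0.le
      rw [add_div] at this
      simp only [hq]; linarith
    have : 0 < ε / z0 / 2 := by positivity
    linarith
  have hprob : ∀ μ ∈ P, IsProbabilityMeasure (Qn μ) := by
    intro μ h
    rw [hQ μ h]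
    have := bern_prob (z0 := z0) (hlo0.le.trans (hqlo μ h)) ((hqhi μ h).trans hhi1.le)
    infer_instance
  have hov : ovl n a b ≤ etaA Qn P θ D := by
    have hcl : IsClosed {x : ℝ × ℝ | ovl n x.1 x.2 ≤ etaA Qn P θ D} :=
      isClosed_le (ovl_cont n) continuous_const
    have hsub : S0 ×ˢ S1 ⊆ {x : ℝ × ℝ | ovl n x.1 x.2 ≤ etaA Qn P θ D} := by
      rintro ⟨_, _⟩ ⟨⟨μ0, h0, rfl⟩, ⟨μ1, h1, rfl⟩⟩
      have := pair_le_etaA Qn P θ hprob D t μ0 μ1 h0.1 h1.1 h0.2 h1.2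
      rw [hQ μ0 h0.1, hQ μ1 h1.1] at this
      exact (ovl_le_pair n z0 (hlo0.le.trans (hqlo μ0 h0.1)) ((hqhi μ0 h0.1).trans hhi1.le)
        (hlo0.le.trans (hqlo μ1 h1.1)) ((hqhi μ1 h1.1).trans hhi1.le)).trans this
    have hmem : (a, b) ∈ closure (S0 ×ˢ S1) := by
      rw [closure_prod_eq]
      exact ⟨csSup_mem_closure ne0 bd0, csInf_mem_closure ne1 bd1⟩
    exact (hcl.closure_subset_iff.2 hsub) hmem
  obtain ⟨G, hGa, hGb, hG⟩ := exG n ha0 hab hb1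
  have hn' : (0:ℝ) < n := by exact_mod_cast hn
  have hmemT : ∀ s : Fin n → Bool, z0 * (2 * G - 1) ≤ (∑ i, zval z0 (s i)) / n ↔
      G * n ≤ cnt n s := by
    intro s
    rw [zval_mean n hn, mul_le_mul_iff_right₀ hz0, ← le_div_iff₀ hn']
    constructor <;> intro h <;> linarith
  have hov1 : (∑ s, if G * n ≤ cnt n s then wt n a s else 0) ≤ ovl n a b := by
    refine Finset.sum_le_sum fun s _ => ?_
    split_ifs with h
    · rw [min_eq_left ((hG s).1 h)]
    · exact le_min (wt_nonneg n ha0.le (hab.trans hb1).le s) (wt_nonneg n (ha0.trans hab).le hb1.le s)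
  have hov2 : (∑ s, if G * n ≤ cnt n s then 0 else wt n b s) ≤ ovl n a b := by
    refine Finset.sum_le_sum fun s _ => ?_
    split_ifs with h
    · exact le_min (wt_nonneg n ha0.le (hab.trans hb1).le s) (wt_nonneg n (ha0.trans hab).le hb1.le s)
    · rw [min_eq_right ((hG s).2 (not_le.1 h))]
  have hmean : Measurable (fun z : Fin n → ℝ => (∑ i, z i) / (n:ℝ)) := by fun_prop
  refine ⟨Set.Ici (z0 * (2 * G - 1)), measurableSet_Ici, ?_, ?_, ?_, ?_⟩
  · intro μ h ht
    rw [hQ μ h]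
    refine (bern_measure n z0 (hlo0.le.trans (hqlo μ h)) ((hqhi μ h).trans hhi1.le) _
      (hmean measurableSet_Ici)).trans_le ?_
    refine ENNReal.ofReal_le_ofReal ?_
    simp only [Set.mem_preimage, Set.mem_Ici, hmemT]
    exact (tail_mono n (hlo0.trans_le (hqlo μ h)) (hqa μ h ht) (hab.trans hb1) _).trans
      (hov1.trans (hov.trans (le_max_left _ _)))
  · intro μ h ht
    rw [hQ μ h]
    refine (bern_measure n z0 (hlo0.le.trans (hqlo μ h)) ((hqhi μ h).trans hhi1.le) _
      (hmean measurableSet_Ici.compl)).trans_le ?_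
    refine ENNReal.ofReal_le_ofReal ?_
    simp only [Set.mem_preimage, Set.mem_compl_iff, Set.mem_Ici, hmemT, ite_not]
    exact (tail_anti n (ha0.trans hab) (hqb μ h ht) ((hqhi μ h).trans_lt hhi1) _).trans
      (hov2.trans (hov.trans (le_max_left _ _)))
  · intro y hy μ h ht
    rw [hFq μ]
    refine le_trans ?_ hy
    have := hqa μ h ht
    exact mul_le_mul_of_nonneg_left (by linarith) hz0.le
  · intro y hy μ h ht
    rw [hFq μ]
    refine le_trans (not_le.1 hy).le ?_
    have := hqb μ h ht
    exact mul_le_mul_of_nonneg_left (by linarith) hz0.le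

lemma mix_integral {X : Type*} [MeasurableSpace X] (ℓ : X → ℝ) (P0 P1 : Measure X)
    (h0 : Integrable ℓ P0) (h1 : Integrable ℓ P1) (lam : ℝ) (l0 : 0 ≤ lam) (l1 : lam ≤ 1) :
    ∫ x, ℓ x ∂(mix lam P0 P1) = lam * (∫ x, ℓ x ∂P0) + (1 - lam) * ∫ x, ℓ x ∂P1 := by
  unfold mix
  rw [integral_add_measure (h0.smul_measure ENNReal.ofReal_ne_top)
    (h1.smul_measure ENNReal.ofReal_ne_top), integral_smul_measure, integral_smul_measure,
    ENNReal.toReal_ofReal l0, ENNReal.toReal_ofReal (by linarith)]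
  rfl

lemma exists_theta {X : Type*} [MeasurableSpace X] (P : Set (Measure X))
    (hconv : ConvexMeasureSet P) (θ : Measure X → ℝ) (hlin : LinearFunctional P θ)
    (t : ℝ) (P0 P1 : Measure X) (h0 : P0 ∈ P) (h1 : P1 ∈ P) (ht0 : θ P0 < t) (ht1 : t < θ P1) :
    ∃ μ ∈ P, θ μ = t := by
  have hd : 0 < θ P1 - θ P0 := by linarith
  have l0 : 0 ≤ (t - θ P0) / (θ P1 - θ P0) := div_nonneg (by linarith) hd.le
  have l1 : (t - θ P0) / (θ P1 - θ P0) ≤ 1 := by rw [div_le_one hd]; linarith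
  refine ⟨mix ((t - θ P0) / (θ P1 - θ P0)) P1 P0, hconv _ h1 _ h0 _ l0 l1, ?_⟩
  rw [hlin _ h1 _ h0 _ l0 l1]
  field_simp
  ring

lemma exists_line {X : Type*} [MeasurableSpace X] (P : Set (Measure X))
    (hconv : ConvexMeasureSet P) (θ F : Measure X → ℝ) (hlin : LinearFunctional P θ)
    (hF : LinearFunctional P F) (Δ ε : ℝ) (hΔ : 0 < Δ) (hε : 0 < ε)
    (hsep : ∀ P0 ∈ P, ∀ P1 ∈ P, Δ ≤ θ P0 - θ P1 → ε ≤ F P0 - F P1)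
    (ν0 ν1 : Measure X) (hν0 : ν0 ∈ P) (hν1 : ν1 ∈ P) (hν : Δ < θ ν1 - θ ν0) :
    ∃ s b : ℝ, 0 < s ∧ ∀ μ ∈ P, F μ ≤ s * θ μ + b ∧ s * (θ μ - Δ) + b ≤ F μ := by
  set A : Set (ℝ × ℝ) := {x | ∃ μ ∈ P, θ μ < x.1 ∧ x.2 < F μ} with hA
  set B : Set (ℝ × ℝ) := {x | ∃ μ ∈ P, x = (θ μ - Δ, F μ)} with hB
  have hAc : Convex ℝ A := by
    rintro x ⟨μ, hμ, h1, h2⟩ y ⟨μ', hμ', h1', h2'⟩ a b ha hb hab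
    have ha1 : a ≤ 1 := by linarith
    have eb : b = 1 - a := by linarith
    refine ⟨mix a μ μ', hconv _ hμ _ hμ' a ha ha1, ?_, ?_⟩
    · rw [hlin _ hμ _ hμ' a ha ha1, ← eb]
      simp only [Prod.fst_add, Prod.smul_fst, smul_eq_mul]
      rcases ha.eq_or_lt with rfl | ha
      · have : b = 1 := by linarith
        subst this; linarith
      · have := mul_lt_mul_of_pos_left h1 ha
        have := mul_le_mul_of_nonneg_left h1'.le hb
        linarith
    · rw [hF _ hμ _ hμ' a ha ha1, ← eb]
      simp only [Prod.snd_add, Prod.smul_snd, smul_eq_mul]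
      rcases ha.eq_or_lt with rfl | ha
      · have : b = 1 := by linarith
        subst this; linarith
      · have := mul_lt_mul_of_pos_left h2 ha
        have := mul_le_mul_of_nonneg_left h2'.le hb
        linarith
  have hBc : Convex ℝ B := by
    rintro x ⟨μ, hμ, rfl⟩ y ⟨μ', hμ', rfl⟩ a b ha hb hab
    have ha1 : a ≤ 1 := by linarith
    have eb : b = 1 - a := by linarith
    refine ⟨mix a μ μ', hconv _ hμ _ hμ' a ha ha1, ?_⟩
    rw [hlin _ hμ _ hμ' a ha ha1, hF _ hμ _ hμ' a ha ha1, eb]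
    ext <;> simp <;> ring
  have hAo : IsOpen A := by
    have : A = ⋃ μ ∈ P, Set.Ioi (θ μ) ×ˢ Set.Iio (F μ) := by
      ext x
      simp only [hA, Set.mem_setOf_eq, Set.mem_iUnion, Set.mem_prod, Set.mem_Ioi, Set.mem_Iio,
        exists_prop]
    rw [this]
    exact isOpen_biUnion fun μ _ => isOpen_Ioi.prod isOpen_Iio
  have hdis : Disjoint A B := by
    rw [Set.disjoint_left]
    rintro _ ⟨μ, hμ, h1, h2⟩ ⟨μ', hμ', rfl⟩
    have := hsep μ' hμ' μ hμ (by simp only at h1; linarith)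
    simp only at h2
    linarith
  obtain ⟨f, u, hfA, hfB⟩ := geometric_hahn_banach_open hAc hAo hBc hdis
  set a := f (1, 0) with haf
  set b := f (0, 1) with hbf
  have hf : ∀ x y, f (x, y) = a * x + b * y := by
    intro x y
    have : ((x, y) : ℝ × ℝ) = x • (1, 0) + y • (0, 1) := by ext <;> simp
    rw [this, map_add, map_smul, map_smul, smul_eq_mul, smul_eq_mul]; ring
  have hA' : ∀ μ ∈ P, ∀ x > 0, ∀ y > 0, a * (θ μ + x) + b * (F μ - y) < u := by
    intro μ hμ x hx y hy
    rw [← hf]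
    exact hfA _ ⟨μ, hμ, by simpa using hx, by simpa using hy⟩
  have hB' : ∀ μ ∈ P, u ≤ a * (θ μ - Δ) + b * F μ := by
    intro μ hμ
    rw [← hf]
    exact hfB _ ⟨μ, hμ, rfl⟩
  have hA'' : ∀ μ ∈ P, a * θ μ + b * F μ ≤ u := by
    intro μ hμ
    by_contra hcon
    push Not at hcon
    set g := a * θ μ + b * F μ - u with hg
    have hg0 : 0 < g := by linarith
    have hden : 0 < |a| + |b| + 1 := by positivity
    have hδ : 0 < g / (|a| + |b| + 1) := by positivity
    have h := hA' μ hμ _ hδ _ hδ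
    have e : g / (|a| + |b| + 1) * (|a| + |b| + 1) = g := by field_simp
    nlinarith [neg_abs_le a, le_abs_self b]
  have hb0 : 0 ≤ b := by
    by_contra hcon
    push Not at hcon
    have h := hA' ν0 hν0 1 one_pos ((|u - a * (θ ν0 + 1) - b * F ν0| + 1) / (-b))
      (div_pos (by positivity) (by linarith))
    have e : b * ((|u - a * (θ ν0 + 1) - b * F ν0| + 1) / (-b)) =
      -(|u - a * (θ ν0 + 1) - b * F ν0| + 1) := by
      have : b ≠ 0 := hcon.ne
      field_simp
    rw [mul_sub, e] at h
    linarith [le_abs_self (u - a * (θ ν0 + 1) - b * F ν0)]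
  have hbpos : 0 < b := by
    rcases hb0.eq_or_lt with hb | hb
    · exfalso
      have k1 := hA' ν0 hν0 (θ ν1 - θ ν0 - Δ) (by linarith) 1 one_pos
      have k2 := hB' ν1 hν1
      rw [← hb] at k1 k2
      nlinarith
    · exact hb
  have hFν := hsep ν1 hν1 ν0 hν0 hν.le
  have haneg : a < 0 := by
    have k1 := hA'' ν1 hν1
    have k2 := hB' ν0 hν0
    by_contra hcon
    push Not at hcon
    have : 0 < b * (F ν1 - F ν0) := mul_pos hbpos (by linarith)
    nlinarith
  refine ⟨-a / b, u / b, div_pos (by linarith) hbpos, fun μ hμ => ⟨?_, ?_⟩⟩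
  · have := hA'' μ hμ
    rw [div_mul_eq_mul_div, ← add_div, le_div_iff₀ hbpos]; linarith
  · have := hB' μ hμ
    rw [div_mul_eq_mul_div, ← add_div, div_le_iff₀ hbpos]; linarith

/-- Proposition: the binary search estimator is nearly affine, part (ii).
Suppose `𝒫` is convex, `θ` is linear with `-∞ < M₋ < M₊ < ∞`, and there is a bounded
measurable `ℓ* : X → ℝ` with `‖ℓ*‖_∞ ≤ 1` and
`inf {∫ ℓ* dP0 - ∫ ℓ* dP1 : θ(P0) - θ(P1) ≥ Δ, P0, P1 ∈ 𝒫} > 0`. Let `Q1 = Q1^{(α,ℓ*)}`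
be the binary channel and `Q` the corresponding non-interactive channel. Then there exist a
measurable estimator `θ̂` satisfying the binary-search tail bound and an affine function
`g(x) = c x + d` such that `|Π_{[M₋,M₊]}(g(z̄_n)) - θ̂(z)| ≤ 2Δ` for all `z`. -/
theorem statement12 {X : Type*} [MeasurableSpace X] (α : ℝ) (hα : 0 < α)
    (n : ℕ) (hn : 0 < n)
    (P : Set (Measure X)) (hP : ∀ μ ∈ P, IsProbabilityMeasure μ)
    (hconv : ConvexMeasureSet P) (θ : Measure X → ℝ) (hlin : LinearFunctional P θ)
    (Δ : ℝ) (hΔ : 0 < Δ)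
    (Mlo Mhi : ℝ) (hMlo : Mlo = sInf (θ '' P)) (hMhi : Mhi = sSup (θ '' P))
    (hne : P.Nonempty) (hbb : BddBelow (θ '' P)) (hba : BddAbove (θ '' P)) (hlt : Mlo < Mhi)
    (ℓs : X → ℝ) (hmeas : Measurable ℓs) (hbdd : ∀ x, |ℓs x| ≤ 1)
    (hsep : ∃ ε : ℝ, 0 < ε ∧ ∀ P0 ∈ P, ∀ P1 ∈ P, Δ ≤ θ P0 - θ P1 →
      ε ≤ (∫ x, ℓs x ∂P0) - ∫ x, ℓs x ∂P1)
    (N : ℕ) (hN1 : Mhi - Mlo < N * Δ) (hN2 : ∀ m : ℕ, Mhi - Mlo < m * Δ → N ≤ m) :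
    ∃ est : (Fin n → ℝ) → ℝ, Measurable est ∧
      (∀ L : ℕ, ∀ μ ∈ P,
        (Measure.pi fun _ : Fin n => push (binChannel α ℓs) μ)
            {z | ((L : ℝ) + 1) * Δ < |est z - θ μ|}
          ≤ ENNReal.ofReal (4 * ∑ k ∈ Finset.Icc (L + 1) (N - 2),
              max (etaA
                (fun μ' : Measure X => Measure.pi fun _ : Fin n => push (binChannel α ℓs) μ')
                P θ ((k : ℝ) * Δ)) 0)) ∧
      ∃ c d : ℝ, ∀ z : Fin n → ℝ,
        |max Mlo (min Mhi (c * ((∑ i, z i) / n) + d)) - est z| ≤ 2 * Δ := by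
  classical
  obtain ⟨ε, hε, hsep⟩ := hsep
  have hθlo : ∀ μ ∈ P, Mlo ≤ θ μ := fun μ h => hMlo ▸ csInf_le hbb ⟨μ, h, rfl⟩
  have hθhi : ∀ μ ∈ P, θ μ ≤ Mhi := fun μ h => hMhi ▸ le_csSup hba ⟨μ, h, rfl⟩
  have hneI : (θ '' P).Nonempty := hne.image θ
  have exlo : ∀ t, Mlo < t → ∃ μ ∈ P, θ μ < t := by
    intro t ht
    obtain ⟨_, ⟨μ, h, rfl⟩, h'⟩ := exists_lt_of_csInf_lt hneI (hMlo ▸ ht)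
    exact ⟨μ, h, h'⟩
  have exhi : ∀ t, t < Mhi → ∃ μ ∈ P, t < θ μ := by
    intro t ht
    obtain ⟨_, ⟨μ, h, rfl⟩, h'⟩ := exists_lt_of_lt_csSup hneI (hMhi ▸ ht)
    exact ⟨μ, h, h'⟩
  by_cases hN3 : N ≤ 2
  · have hN2' : (N : ℝ) ≤ 2 := by exact_mod_cast hN3
    have hM2 : Mhi - Mlo < 2 * Δ := hN1.trans_le (mul_le_mul_of_nonneg_right hN2' hΔ.le)
    refine ⟨fun _ => Mlo + Δ, measurable_const, ?_, 0, 0, ?_⟩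
    · intro L μ hμ
      have : {z : Fin n → ℝ | ((L : ℝ) + 1) * Δ < |Mlo + Δ - θ μ|} = ∅ := by
        ext z
        simp only [Set.mem_setOf_eq, Set.mem_empty_iff_false, iff_false, not_lt]
        have h1 := hθlo μ hμ
        have h2 := hθhi μ hμ
        have h3 : (0:ℝ) ≤ L * Δ := by positivity
        rw [abs_le]; constructor <;> linarith
      rw [this]; simp
    · intro z
      have h1 := le_max_left Mlo (min Mhi (0 * ((∑ i, z i) / n) + 0))
      have h2 : max Mlo (min Mhi (0 * ((∑ i, z i) / n) + 0)) ≤ Mhi :=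
        max_le hlt.le (min_le_left _ _)
      rw [abs_le]; constructor <;> linarith
  push Not at hN3
  obtain ⟨K, rfl⟩ : ∃ K, N = K + 2 := ⟨N - 2, by omega⟩
  have hK : 1 ≤ K := by omega
  simp only [Nat.add_sub_cancel]
  have hMK : ((K : ℝ) + 1) * Δ ≤ Mhi - Mlo := by
    by_contra hcon
    push Not at hcon
    have := hN2 (K + 1) (by push_cast; exact hcon)
    omega
  push_cast at hN1
  have hK' : (1:ℝ) ≤ K := by exact_mod_cast hK
  -- a well separated pair
  obtain ⟨ν0, hν0, hν0t⟩ := exlo (Mlo + Δ / 2) (by linarith)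
  obtain ⟨ν1, hν1, hν1t⟩ := exhi (Mhi - Δ / 2) (by linarith)
  have hKΔ : Δ ≤ K * Δ := by nlinarith
  have hνd : Δ < θ ν1 - θ ν0 := by linarith
  set F : Measure X → ℝ := fun μ => ∫ x, ℓs x ∂μ with hF
  have hsep' : ∀ P0 ∈ P, ∀ P1 ∈ P, Δ ≤ θ P0 - θ P1 → ε ≤ F P0 - F P1 := hsep
  have hint : ∀ μ ∈ P, Integrable ℓs μ := by
    intro μ hμ
    have := hP μ hμ
    exact Integrable.of_bound hmeas.aestronglyMeasurable 1 (Filter.Eventually.of_forall hbdd)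
  have hFlin : LinearFunctional P F := fun P0 h0 P1 h1 lam l0 l1 =>
    mix_integral ℓs P0 P1 (hint _ h0) (hint _ h1) lam l0 l1
  set σ := supNorm ℓs with hσ
  have hℓσ : ∀ x, |ℓs x| ≤ σ := fun x =>
    le_ciSup (f := fun x => |ℓs x|) ⟨1, by rintro _ ⟨x, rfl⟩; exact hbdd x⟩ x
  have hFσ : ∀ μ ∈ P, |F μ| ≤ σ := by
    intro μ hμ
    have := hP μ hμ
    have h := norm_integral_le_of_norm_le_const (μ := μ) (f := ℓs) (C := σ)
      (Filter.Eventually.of_forall hℓσ)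
    simpa using h
  have hσ0 : 0 < σ := by
    have h := hsep' ν1 hν1 ν0 hν0 hνd.le
    have h1 := abs_le.1 (hFσ ν1 hν1)
    have h0 := abs_le.1 (hFσ ν0 hν0)
    linarith
  have hexp : 1 < Real.exp α := Real.one_lt_exp_iff.2 hα
  set z0 := σ * ((Real.exp α + 1) / (Real.exp α - 1)) with hz0d
  have hr : 1 < (Real.exp α + 1) / (Real.exp α - 1) := by
    rw [one_lt_div (by linarith)]; linarith
  have hσz : σ < z0 := by rw [hz0d]; nlinarith
  have hz0 : 0 < z0 := hσ0.trans hσz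
  set Qn : Measure X → Measure (Fin n → ℝ) :=
    fun μ' => Measure.pi fun _ : Fin n => push (binChannel α ℓs) μ' with hQn
  have hQ : ∀ μ ∈ P, Qn μ = Measure.pi fun _ : Fin n => bern z0 ((1 + F μ / z0) / 2) := by
    intro μ hμ
    have := hP μ hμ
    simp only [hQn, hF]
    rw [push_eq α ℓs hmeas μ z0 hz0d hz0 (fun x => (hℓσ x).trans hσz.le)]
  set E : ℕ → ℝ := fun k => max (etaA Qn P θ ((k : ℝ) * Δ)) 0 with hE
  have hE0 : ∀ k, 0 ≤ E k := fun k => le_max_right _ _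
  -- the tests
  have htest : ∀ a b : ℕ, ∃ T : Set ℝ, MeasurableSet T ∧ (a < b →
      (∀ μ ∈ P, θ μ ≤ Mlo + a * Δ → Qn μ {z | (∑ i, z i) / n ∈ T} ≤ ENNReal.ofReal (E (b - a))) ∧
      (∀ μ ∈ P, Mlo + b * Δ ≤ θ μ → Qn μ {z | (∑ i, z i) / n ∉ T} ≤ ENNReal.ofReal (E (b - a))) ∧
      (∀ y ∈ T, ∀ μ ∈ P, θ μ ≤ Mlo + a * Δ → F μ ≤ y) ∧
      (∀ y ∉ T, ∀ μ ∈ P, Mlo + b * Δ ≤ θ μ → y ≤ F μ)) := by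
    intro a b
    by_cases hab : a < b
    swap
    · exact ⟨∅, MeasurableSet.empty, fun h => absurd h hab⟩
    have hc : ((b - a : ℕ) : ℝ) = (b : ℝ) - a := Nat.cast_sub hab.le
    have e : Mlo + a * Δ + ((b - a : ℕ) : ℝ) * Δ = Mlo + b * Δ := by rw [hc]; ring
    have h1 : (1:ℝ) ≤ ((b - a : ℕ) : ℝ) := by exact_mod_cast (by omega : 1 ≤ b - a)
    obtain ⟨T, hT⟩ := test_exists n hn z0 σ hz0 hσz P θ F Qn hQ hFσ (Mlo + a * Δ)
      (((b - a : ℕ) : ℝ) * Δ) ε hε (by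
        intro P0 h0 P1 h1' t0 t1
        have := hsep' P1 h1' P0 h0 (by nlinarith)
        linarith)
    rw [e] at hT
    exact ⟨T, hT.1, fun _ => hT.2⟩
  choose T hTm hT using htest
  have hmean : Measurable (fun z : Fin n → ℝ => (∑ i, z i) / (n:ℝ)) := by fun_prop
  set M : (Fin n → ℝ) → ℕ := fun z => srch (fun a b => (∑ i, z i) / (n:ℝ) ∈ T a b) K 0 with hM
  have hMm : Measurable M := srch_measurable T hTm _ hmean K 0
  refine ⟨fun z => Mlo + M z * Δ, ?_, ?_, ?_⟩
  · exact measurable_const.add (((measurable_from_top (f := fun k : ℕ => (k:ℝ))).comp hMm).mul_const Δ)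
  · intro L μ hμ
    -- locate θ
    set i0 := ⌊(θ μ - Mlo) / Δ⌋₊ with hi0
    have hq0 : 0 ≤ (θ μ - Mlo) / Δ := div_nonneg (by linarith [hθlo μ hμ]) hΔ.le
    have f1 : Mlo + i0 * Δ ≤ θ μ := by
      have := Nat.floor_le hq0
      rw [le_div_iff₀ hΔ] at this
      linarith
    have f2 : θ μ < Mlo + (i0 + 1) * Δ := by
      have := Nat.lt_floor_add_one ((θ μ - Mlo) / Δ)
      rw [div_lt_iff₀ hΔ] at this
      linarith
    have hi0K : i0 + 1 ≤ K + 2 := by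
      have h : (i0 : ℝ) * Δ < ((K + 2 : ℕ) : ℝ) * Δ := by
        push_cast; linarith [hθhi μ hμ]
      have := lt_of_mul_lt_mul_right h hΔ.le
      have : i0 < K + 2 := by exact_mod_cast this
      omega
    have hsub : {z : Fin n → ℝ | ((L : ℝ) + 1) * Δ < |Mlo + M z * Δ - θ μ|} ⊆
        (⋃ k ∈ Finset.Icc (L + 1) K, {z | (∑ i, z i) / n ∈ T (i0 + 1) (i0 + 1 + k)}) ∪
        (⋃ k ∈ Finset.Icc (L + 1) K, {z | (∑ i, z i) / n ∉ T (i0 - k) i0 ∧ k ≤ i0}) := by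
      intro z hz
      simp only [Set.mem_setOf_eq] at hz
      rcases lt_abs.1 hz with h | h
      · left
        have h' : ((i0 + 1 + L : ℕ) : ℝ) * Δ < (M z : ℝ) * Δ := by push_cast; linarith
        have h'' : i0 + 1 + L < M z := by exact_mod_cast lt_of_mul_lt_mul_right h' hΔ.le
        obtain ⟨k', k1, k2, k3⟩ := srch_upper _ L i0 K 0 (Nat.zero_le _) h''
        simp only [Set.mem_iUnion, Finset.mem_Icc]
        exact ⟨k', ⟨k1, k2⟩, k3⟩
      · right
        have h' : ((M z + 1 + L : ℕ) : ℝ) * Δ < ((i0 + 1 : ℕ) : ℝ) * Δ := by push_cast; linarith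
        have h'' : M z + 1 + L < i0 + 1 := by exact_mod_cast lt_of_mul_lt_mul_right h' hΔ.le
        obtain ⟨k', a, k1, k2, k3, k4⟩ := srch_lower _ L (i0 + 1) K 0 (by omega) h''
        simp only [Set.mem_iUnion, Finset.mem_Icc]
        refine ⟨k', ⟨k1, k2⟩, ?_⟩
        have e1 : i0 = a + k' := by omega
        have e2 : i0 - k' = a := by omega
        refine ⟨?_, by omega⟩
        rw [e2, e1]; exact k4
    have b1 : Qn μ (⋃ k ∈ Finset.Icc (L + 1) K, {z | (∑ i, z i) / n ∈ T (i0 + 1) (i0 + 1 + k)}) ≤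
        ENNReal.ofReal (∑ k ∈ Finset.Icc (L + 1) K, E k) := by
      refine (measure_biUnion_finset_le _ _).trans ?_
      rw [ENNReal.ofReal_sum_of_nonneg fun k _ => hE0 k]
      refine Finset.sum_le_sum fun k hk => ?_
      rw [Finset.mem_Icc] at hk
      have := (hT (i0 + 1) (i0 + 1 + k) (by omega)).1 μ hμ (by push_cast; exact f2.le)
      rwa [Nat.add_sub_cancel_left] at this
    have b2 : Qn μ (⋃ k ∈ Finset.Icc (L + 1) K, {z | (∑ i, z i) / n ∉ T (i0 - k) i0 ∧ k ≤ i0}) ≤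
        ENNReal.ofReal (∑ k ∈ Finset.Icc (L + 1) K, E k) := by
      refine (measure_biUnion_finset_le _ _).trans ?_
      rw [ENNReal.ofReal_sum_of_nonneg fun k _ => hE0 k]
      refine Finset.sum_le_sum fun k hk => ?_
      rw [Finset.mem_Icc] at hk
      by_cases hki : k ≤ i0
      · have := (hT (i0 - k) i0 (by omega)).2.1 μ hμ f1
        rw [show i0 - (i0 - k) = k by omega] at this
        exact (measure_mono fun z hz => hz.1).trans this
      · simp [hki]
    have hS0 : 0 ≤ ∑ k ∈ Finset.Icc (L + 1) K, E k := Finset.sum_nonneg fun k _ => hE0 k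
    calc _ ≤ _ := measure_mono hsub
      _ ≤ _ := measure_union_le _ _
      _ ≤ _ := add_le_add b1 b2
      _ = ENNReal.ofReal ((∑ k ∈ Finset.Icc (L + 1) K, E k) + ∑ k ∈ Finset.Icc (L + 1) K, E k) :=
        (ENNReal.ofReal_add hS0 hS0).symm
      _ ≤ _ := ENNReal.ofReal_le_ofReal (by linarith)
  · obtain ⟨s, b, hs, hline⟩ := exists_line P hconv θ F hlin hFlin Δ ε hΔ hε hsep' ν0 ν1 hν0 hν1 hνd
    refine ⟨1 / s, -b / s, fun z => ?_⟩
    set y := (∑ i, z i) / (n:ℝ) with hy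
    have hg : 1 / s * y + -b / s = (y - b) / s := by ring
    rw [hg]
    have hbnd := srch_bounds (fun a b => y ∈ T a b) K 0
    have hl := srch_left (fun a b => y ∈ T a b) K 0
    have hrt := srch_right (fun a b => y ∈ T a b) K 0
    change |max Mlo (min Mhi ((y - b) / s)) -
      (Mlo + (srch (fun a b => y ∈ T a b) K 0 : ℕ) * Δ)| ≤ 2 * Δ
    set m := srch (fun a b => y ∈ T a b) K 0 with hm
    have c1 := le_max_left Mlo (min Mhi ((y - b) / s))
    have c2 : max Mlo (min Mhi ((y - b) / s)) ≤ Mhi := max_le hlt.le (min_le_left _ _)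
    have hmK : (m : ℝ) ≤ K + 1 := by exact_mod_cast (by omega : m ≤ K + 1)
    have hmK' : (m : ℝ) * Δ ≤ (K + 1) * Δ := mul_le_mul_of_nonneg_right hmK hΔ.le
    have hget : ∀ j : ℕ, 1 ≤ j → Mlo + j * Δ < Mhi → ∃ μ ∈ P, θ μ = Mlo + j * Δ := by
      intro j hj hj2
      have : (1:ℝ) ≤ j := by exact_mod_cast hj
      obtain ⟨P0, h0, h0t⟩ := exlo (Mlo + j * Δ) (by nlinarith)
      obtain ⟨P1, h1, h1t⟩ := exhi (Mlo + j * Δ) hj2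
      exact exists_theta P hconv θ hlin _ P0 P1 h0 h1 h0t h1t
    rw [abs_le]
    constructor
    · rcases hl with h | ⟨a, b', h1, h2, h3, h4⟩
      · rw [h]; push_cast; linarith
      · have hma : (m : ℝ) = a + 1 := by rw [← h1]; push_cast; ring
        rw [hma] at hmK' ⊢
        obtain ⟨μ, hμ, hθ⟩ := hget a (by omega) (by linarith)
        have k1 := (hT a b' h3).2.2.1 y h4 μ hμ hθ.le
        have k2 := (hline μ hμ).2
        rw [hθ] at k2
        have k3 : Mlo + a * Δ - Δ ≤ (y - b) / s := by rw [le_div_iff₀ hs]; linarith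
        have k4 : Mlo + a * Δ - Δ ≤ min Mhi ((y - b) / s) := le_min (by linarith) k3
        have k5 := k4.trans (le_max_right Mlo _)
        linarith
    · rcases hrt with h | ⟨a, b', h1, h2, h3, h4⟩
      · have : (m : ℝ) = K + 1 := by rw [h]; push_cast; ring
        rw [this]; linarith
      · by_cases hb' : Mlo + b' * Δ < Mhi
        · obtain ⟨μ, hμ, hθ⟩ := hget b' (by omega) hb'
          have k1 := (hT a b' h2).2.2.2 y h4 μ hμ hθ.ge
          have k2 := (hline μ hμ).1
          rw [hθ] at k2
          have k3 : (y - b) / s ≤ Mlo + b' * Δ := by rw [div_le_iff₀ hs]; linarith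
          have k4 : max Mlo (min Mhi ((y - b) / s)) ≤ Mlo + b' * Δ :=
            max_le (by have : (0:ℝ) ≤ b' * Δ := by positivity
                       linarith) ((min_le_right _ _).trans k3)
          rw [h1] at k4
          push_cast at k4
          linarith
        · rw [h1] at hb'
          push_cast at hb'
          linarith

end PrivacyPaper
end
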